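/- arXiv:2011.05170 — 6 statements merged into one kernel-verified Lean document; each statement's English description precedes it below -/
import Mathlib

section
/- Let φ be a finite nonnegative Borel measure on X×Y all of whose moments φ_d := ∫_{X×Y} x^{d_x} y^{d_y} dφ(x,y) are finite, and suppose φ_{(d_x,0)} = λ_{d_x} and φ_{(d_x,1)} = μ_{(d_x,1)} for all d_x ∈ ℕ^n. Then φ_d ≥ μ_d for every d ∈ ℕ^n × ℕ. -/
open MeasureTheory Set

noncomputable section

lemma tangent_pow (m : ℕ) (a y : ℝ) (ha : 0 ≤ a) (hy : 0 ≤ y) :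
    (m + 1) * (a ^ m * y) ≤ y ^ (m + 1) + m * a ^ (m + 1) := by
  induction m with
  | zero => simp
  | succ m ih =>
    have h1 : 0 ≤ (y ^ (m+1) - a ^ (m+1)) * (y - a) := by
      rcases le_total a y with h | h
      · exact mul_nonneg (sub_nonneg.2 (pow_le_pow_left₀ ha h _)) (sub_nonneg.2 h)
      · exact mul_nonneg_of_nonpos_of_nonpos (sub_nonpos.2 (pow_le_pow_left₀ hy h _))
          (sub_nonpos.2 h)
    have h2 := mul_le_mul_of_nonneg_left ih ha
    push_cast
    ring_nf at h1 h2 ⊢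
    linarith

lemma ext_of_moments (n : ℕ) (X : Set (Fin n → ℝ)) (hXc : IsCompact X)
    (μ ν : Measure (Fin n → ℝ)) [IsFiniteMeasure μ] [IsFiniteMeasure ν]
    (hμ : μ Xᶜ = 0) (hν : ν Xᶜ = 0)
    (h : ∀ d : Fin n → ℕ, ∫ x, ∏ i, x i ^ d i ∂μ = ∫ x, ∏ i, x i ^ d i ∂ν) : μ = ν := by
  have hXm : MeasurableSet X := hXc.isClosed.measurableSet
  have hμr : μ.restrict X = μ := Measure.restrict_eq_self_of_ae_mem hμ
  have hνr : ν.restrict X = ν := Measure.restrict_eq_self_of_ae_mem hν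
  have : CompactSpace X := isCompact_iff_compactSpace.1 hXc
  let c : Fin n → BoundedContinuousFunction X ℝ := fun i =>
    BoundedContinuousFunction.mkOfCompact ⟨fun x => x.1 i, (continuous_apply i).comp continuous_subtype_val⟩
  let A : StarSubalgebra ℝ (BoundedContinuousFunction X ℝ) :=
    { (MvPolynomial.aeval c : MvPolynomial (Fin n) ℝ →ₐ[ℝ] _).range with
      star_mem' := by
        intro a ha
        have : star a = a := by ext x; simp
        simpa [this] using ha }
  have hint : ∀ (κ : Measure (Fin n → ℝ)) [IsFiniteMeasure κ], κ.restrict X = κ →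
      ∀ p : MvPolynomial (Fin n) ℝ,
      ∫ x : X, (MvPolynomial.aeval c p) x ∂(κ.comap Subtype.val)
        = ∑ d ∈ p.support, p.coeff d * ∫ x, ∏ i, x i ^ d i ∂κ := by
    intro κ _ hκ p
    have hp : ∀ x : X, (MvPolynomial.aeval c p) x
        = ∑ d ∈ p.support, p.coeff d * ∏ i, x.1 i ^ d i := by
      intro x
      rw [MvPolynomial.aeval_def, MvPolynomial.eval₂_eq']
      simp [c, BoundedContinuousFunction.sum_apply, BoundedContinuousFunction.prod_apply]
    simp_rw [hp]
    rw [integral_subtype_comap hXm (fun x => ∑ d ∈ p.support, p.coeff d * ∏ i, x i ^ d i)]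
    rw [integral_finsetSum]
    · simp_rw [integral_const_mul, hκ]
    · intro d _
      exact ContinuousOn.integrableOn_compact hXc (by fun_prop)
  have key : μ.comap (Subtype.val : X → _) = ν.comap Subtype.val := by
    have : PolishSpace X := hXc.isClosed.polishSpace
    have hfin : ∀ (κ : Measure (Fin n → ℝ)) [IsFiniteMeasure κ],
        IsFiniteMeasure (κ.comap (Subtype.val : X → _)) := by
      intro κ _
      infer_instance
    have := hfin μ
    have := hfin ν
    refine ext_of_forall_mem_subalgebra_integral_eq_of_polish (𝕜 := ℝ) (A := A) ?_ ?_
    · intro x y hxy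
      obtain ⟨i, hi⟩ : ∃ i, x.1 i ≠ y.1 i := by
        by_contra! hh
        exact hxy (Subtype.ext (funext hh))
      refine ⟨c i, ⟨(BoundedContinuousFunction.toContinuousMap (c i)), ?_, rfl⟩, hi⟩
      exact ⟨c i, ⟨MvPolynomial.X i, by simp⟩, rfl⟩
    · rintro g ⟨p, rfl⟩
      have e1 := hint μ hμr p
      have e2 := hint ν hνr p
      simp_rw [h] at e1
      exact e1.trans e2.symm
  have := congrArg (Measure.map Subtype.val) key
  rwa [map_comap_subtype_coe hXm, map_comap_subtype_coe hXm, hμr, hνr] at this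

/-- If a finite nonnegative Borel measure `φ` on `X × Y` has all moments
finite and its moments of order `(d_x, 0)` and `(d_x, 1)` agree with those of the measure
`μ = δ_{f(x)}(dy) λ(dx)` supported on the graph of `f`, then every moment of `φ`
dominates the corresponding moment of `μ`. -/
theorem moment_domination
    (n : ℕ) (hn : 1 ≤ n)
    (X : Set (Fin n → ℝ)) (hXsub : X ⊆ Icc 0 1) (hXc : IsCompact X)
    (γ : ℝ) (hγ : 0 < γ)
    (lam : Measure (Fin n → ℝ)) [IsProbabilityMeasure lam] (hlam : lam Xᶜ = 0)
    (f : (Fin n → ℝ) → ℝ) (hf : Measurable f) (hfY : ∀ x ∈ X, f x ∈ Icc 0 γ)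
    (φ : Measure ((Fin n → ℝ) × ℝ)) [IsFiniteMeasure φ]
    (hφsupp : φ ((X ×ˢ Icc (0:ℝ) γ)ᶜ) = 0)
    (hφint : ∀ d : (Fin n → ℕ) × ℕ,
      Integrable (fun p : (Fin n → ℝ) × ℝ => (∏ i, p.1 i ^ d.1 i) * p.2 ^ d.2) φ)
    (hmom0 : ∀ dx : Fin n → ℕ,
      ∫ p : (Fin n → ℝ) × ℝ, (∏ i, p.1 i ^ dx i) ∂φ = ∫ x, ∏ i, x i ^ dx i ∂lam)
    (hmom1 : ∀ dx : Fin n → ℕ,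
      ∫ p : (Fin n → ℝ) × ℝ, (∏ i, p.1 i ^ dx i) * p.2 ∂φ
        = ∫ x, (∏ i, x i ^ dx i) * f x ∂lam) :
    ∀ d : (Fin n → ℕ) × ℕ,
      ∫ x, (∏ i, x i ^ d.1 i) * f x ^ d.2 ∂lam
        ≤ ∫ p : (Fin n → ℝ) × ℝ, (∏ i, p.1 i ^ d.1 i) * p.2 ^ d.2 ∂φ := by
  have hXm : MeasurableSet X := hXc.isClosed.measurableSet
  have hlX : ∀ᵐ x ∂lam, x ∈ X := hlam
  have hφX : ∀ᵐ p ∂φ, p.1 ∈ X ∧ p.2 ∈ Icc (0:ℝ) γ := by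
    have : ∀ᵐ p ∂φ, p ∈ X ×ˢ Icc (0:ℝ) γ := hφsupp
    simpa only [mem_prod] using this
  have hPm : ∀ d : Fin n → ℕ, Measurable fun x : Fin n → ℝ => ∏ i, x i ^ d i := by
    intro d; fun_prop
  have hP0 : ∀ (d : Fin n → ℕ), ∀ x ∈ X, 0 ≤ ∏ i, x i ^ d i := fun d x hx =>
    Finset.prod_nonneg fun i _ => pow_nonneg ((hXsub hx).1 i) _
  have hP1 : ∀ (d : Fin n → ℕ), ∀ x ∈ X, ∏ i, x i ^ d i ≤ 1 := fun d x hx =>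
    Finset.prod_le_one (fun i _ => pow_nonneg ((hXsub hx).1 i) _)
      (fun i _ => pow_le_one₀ ((hXsub hx).1 i) ((hXsub hx).2 i))
  have hm1 : φ.map Prod.fst = lam := by
    refine ext_of_moments n X hXc _ _ ?_ hlam ?_
    · rw [Measure.map_apply measurable_fst hXm.compl]
      have : ∀ᵐ p ∂φ, p.1 ∈ X := hφX.mono fun p hp => hp.1
      exact this
    · intro d
      rw [integral_map measurable_fst.aemeasurable (hPm d).aestronglyMeasurable]
      exact hmom0 d
  have hyi : Integrable (fun p : (Fin n → ℝ) × ℝ => p.2) φ := by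
    simpa using hφint (0, 1)
  have hfi : Integrable f lam := by
    refine Integrable.of_bound hf.aestronglyMeasurable γ ?_
    filter_upwards [hlX] with x hx
    rw [Real.norm_of_nonneg (hfY x hx).1]
    exact (hfY x hx).2
  let φ' := φ.withDensity (fun p => ((Real.toNNReal p.2 : NNReal) : ENNReal))
  let lam' := lam.withDensity (fun x => ((Real.toNNReal (f x) : NNReal) : ENNReal))
  have : IsFiniteMeasure φ' := isFiniteMeasure_withDensity_ofReal hyi.2
  have : IsFiniteMeasure lam' := isFiniteMeasure_withDensity_ofReal hfi.2
  have hφ' : ∀ g : (Fin n → ℝ) → ℝ, Measurable g →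
      ∫ x, g x ∂(φ'.map Prod.fst) = ∫ p, g p.1 * p.2 ∂φ := by
    intro g hg
    rw [integral_map measurable_fst.aemeasurable hg.aestronglyMeasurable,
      integral_withDensity_eq_integral_smul (by fun_prop)]
    refine integral_congr_ae ?_
    filter_upwards [hφX] with p hp
    simp [NNReal.smul_def, Real.coe_toNNReal _ hp.2.1, mul_comm]
  have hlam' : ∀ g : (Fin n → ℝ) → ℝ,
      ∫ x, g x ∂lam' = ∫ x, g x * f x ∂lam := by
    intro g
    rw [integral_withDensity_eq_integral_smul (by fun_prop)]
    refine integral_congr_ae ?_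
    filter_upwards [hlX] with x hx
    simp [NNReal.smul_def, Real.coe_toNNReal _ (hfY x hx).1, mul_comm]
  have hm2 : φ'.map Prod.fst = lam' := by
    refine ext_of_moments n X hXc _ _ ?_ ?_ ?_
    · rw [Measure.map_apply measurable_fst hXm.compl]
      refine withDensity_absolutelyContinuous _ _ ?_
      have : ∀ᵐ p ∂φ, p.1 ∈ X := hφX.mono fun p hp => hp.1
      exact this
    · exact withDensity_absolutelyContinuous _ _ hlam
    · intro d
      rw [hφ' _ (hPm d), hlam']
      exact hmom1 d
  rintro ⟨d, k⟩
  rcases k with _ | m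
  · simpa using (hmom0 d).ge
  have hgm : ∀ k : ℕ, Measurable fun x : Fin n → ℝ => (∏ i, x i ^ d i) * f x ^ k := by
    intro k; exact (hPm d).mul (hf.pow_const k)
  have hgb : ∀ k : ℕ, ∀ x ∈ X, ‖(∏ i, x i ^ d i) * f x ^ k‖ ≤ γ ^ k := by
    intro k x hx
    have h0 := pow_nonneg (hfY x hx).1 k
    rw [Real.norm_of_nonneg (mul_nonneg (hP0 d x hx) h0)]
    calc _ ≤ 1 * f x ^ k := mul_le_mul_of_nonneg_right (hP1 d x hx) h0
      _ ≤ γ ^ k := by rw [one_mul]; exact pow_le_pow_left₀ (hfY x hx).1 (hfY x hx).2 k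
  have hA : ∫ p : (Fin n → ℝ) × ℝ, (∏ i, p.1 i ^ d i) * f p.1 ^ (m+1) ∂φ
      = ∫ x, (∏ i, x i ^ d i) * f x ^ (m+1) ∂lam := by
    conv_rhs => rw [← hm1]
    rw [integral_map measurable_fst.aemeasurable (hgm _).aestronglyMeasurable]
  have hB : ∫ p : (Fin n → ℝ) × ℝ, ((∏ i, p.1 i ^ d i) * f p.1 ^ m) * p.2 ∂φ
      = ∫ x, (∏ i, x i ^ d i) * f x ^ (m+1) ∂lam := by
    rw [← hφ' _ (hgm m), hm2, hlam']
    simp only [pow_succ, mul_assoc]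
  have hiA : Integrable (fun p : (Fin n → ℝ) × ℝ => (∏ i, p.1 i ^ d i) * f p.1 ^ (m+1)) φ := by
    refine Integrable.of_bound ((hgm (m+1)).comp measurable_fst).aestronglyMeasurable
      (γ ^ (m+1)) ?_
    filter_upwards [hφX] with p hp using hgb _ _ hp.1
  have hiB : Integrable (fun p : (Fin n → ℝ) × ℝ =>
      ((∏ i, p.1 i ^ d i) * f p.1 ^ m) * p.2) φ := by
    refine hyi.bdd_mul (c := γ ^ m) ((hgm m).comp measurable_fst).aestronglyMeasurable ?_
    filter_upwards [hφX] with p hp using hgb _ _ hp.1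
  have hiC := hφint (d, m+1)
  have hle : ∫ p : (Fin n → ℝ) × ℝ, (m + 1 : ℝ) * (((∏ i, p.1 i ^ d i) * f p.1 ^ m) * p.2) ∂φ
      ≤ ∫ p : (Fin n → ℝ) × ℝ, ((∏ i, p.1 i ^ d i) * p.2 ^ (m+1)
        + (m : ℝ) * ((∏ i, p.1 i ^ d i) * f p.1 ^ (m+1))) ∂φ := by
    refine integral_mono_ae (hiB.const_mul _) (hiC.add (hiA.const_mul _)) ?_
    filter_upwards [hφX] with p hp
    have := mul_le_mul_of_nonneg_left
      (tangent_pow m (f p.1) p.2 (hfY _ hp.1).1 hp.2.1) (hP0 d _ hp.1)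
    linarith
  rw [integral_add hiC (hiA.const_mul _), integral_const_mul, integral_const_mul, hA, hB] at hle
  show ∫ x, (∏ i, x i ^ d i) * f x ^ (m+1) ∂lam ≤ _
  linarith
end
end

section
/- Let φ be a finite nonnegative Borel measure on X×Y all of whose moments φ_d := ∫_{X×Y} x^{d_x} y^{d_y} dφ(x,y) are finite, and suppose φ_{(d_x,0)} = λ_{d_x} and φ_{(d_x,1)} = μ_{(d_x,1)} for all d_x ∈ ℕ^n. Then for every r ∈ ℕ, Σ_{d ∈ ℕ^n×ℕ, |d| ≤ r} μ_{2d} ≤ Σ_{d ∈ ℕ^n×ℕ, |d| ≤ r} φ_{2d}; that is, the trace of the moment matrix of order r of μ is bounded above by that of φ. -/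
open MeasureTheory Set

noncomputable section

/-- The finite set of multi-indices `d ∈ ℕ^n × ℕ` with `|d| ≤ r`. -/
def idx (n r : ℕ) : Finset ((Fin n → ℕ) × ℕ) :=
  Finset.filter (fun d => (∑ i, d.1 i) + d.2 ≤ r)
    ((Fintype.piFinset fun _ : Fin n => Finset.range (r + 1)) ×ˢ Finset.range (r + 1))


lemma integrable_of_cont {α : Type*} [TopologicalSpace α] [MeasurableSpace α]
    [OpensMeasurableSpace α]
    {K : Set α} (hK : IsCompact K) (μ : Measure α) [IsFiniteMeasure μ]
    (hμ : ∀ᵐ x ∂μ, x ∈ K) {g : α → ℝ} (hg : Continuous g) : Integrable g μ := by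
  obtain ⟨C, hC⟩ := hK.exists_bound_of_continuousOn hg.continuousOn
  exact Integrable.of_bound hg.measurable.aestronglyMeasurable C (hμ.mono fun x hx => hC x hx)

lemma exists_poly_approx {n : ℕ} {K : Set (Fin n → ℝ)} (hK : IsCompact K)
    (g : (Fin n → ℝ) → ℝ) (hg : Continuous g) (ε : ℝ) (hε : 0 < ε) :
    ∃ p : MvPolynomial (Fin n) ℝ, ∀ x ∈ K, |MvPolynomial.eval x p - g x| < ε := by
  have : CompactSpace K := isCompact_iff_compactSpace.mp hK
  let c : Fin n → C(K, ℝ) := fun i => ⟨fun x => x.1 i, (continuous_apply i).comp continuous_subtype_val⟩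
  have hev : ∀ (p : MvPolynomial (Fin n) ℝ) (x : K),
      (MvPolynomial.aeval c p : C(K, ℝ)) x = MvPolynomial.eval x.1 p := by
    intro p x
    induction p using MvPolynomial.induction_on with
    | C a => simp
    | add p q hp hq => simp [hp, hq]
    | mul_X p i hp => simp [hp, c]
  have hsep : (MvPolynomial.aeval (R := ℝ) c).range.SeparatesPoints := by
    intro x y hxy
    have : ∃ i, x.1 i ≠ y.1 i := by
      by_contra! h
      exact hxy (Subtype.ext (funext h))
    obtain ⟨i, hi⟩ := this
    exact ⟨c i, ⟨c i, ⟨MvPolynomial.X i, by simp⟩, rfl⟩, hi⟩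
  obtain ⟨⟨q, p, hp⟩, hq⟩ :=
    ContinuousMap.exists_mem_subalgebra_near_continuous_of_separatesPoints _ hsep
      (fun x : K => g x.1) (by fun_prop) ε hε
  refine ⟨p, fun x hx => ?_⟩
  have h := hq ⟨x, hx⟩
  rw [← hev p ⟨x, hx⟩]
  have hp' : MvPolynomial.aeval c p = q := hp
  rw [hp']
  exact h

lemma meas_ext {n : ℕ} {K : Set (Fin n → ℝ)} (hK : IsCompact K)
    (μ ν : Measure (Fin n → ℝ)) [IsFiniteMeasure μ] [IsFiniteMeasure ν]
    (hμ : ∀ᵐ x ∂μ, x ∈ K) (hν : ∀ᵐ x ∂ν, x ∈ K)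
    (h : ∀ d : Fin n → ℕ, ∫ x, ∏ i, x i ^ d i ∂μ = ∫ x, ∏ i, x i ^ d i ∂ν) : μ = ν := by
  apply ext_of_forall_integral_eq_of_IsFiniteMeasure
  intro g
  have hpoly : ∀ p : MvPolynomial (Fin n) ℝ,
      ∫ x, MvPolynomial.eval x p ∂μ = ∫ x, MvPolynomial.eval x p ∂ν := by
    intro p
    simp only [MvPolynomial.eval_eq']
    rw [integral_finsetSum, integral_finsetSum]
    · simp only [integral_const_mul, h]
    · intro d _
      exact integrable_of_cont hK ν hν (by fun_prop)
    · intro d _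
      exact integrable_of_cont hK μ hμ (by fun_prop)
  have key : ∀ (ρ : Measure (Fin n → ℝ)) [IsFiniteMeasure ρ], (∀ᵐ x ∂ρ, x ∈ K) →
      ∀ (p : MvPolynomial (Fin n) ℝ) (ε : ℝ), (∀ x ∈ K, |MvPolynomial.eval x p - g x| < ε) →
      |∫ x, MvPolynomial.eval x p ∂ρ - ∫ x, g x ∂ρ| ≤ ε * ρ.real univ := by
    intro ρ _ hρ p ε hp
    rw [← integral_sub (integrable_of_cont hK ρ hρ p.continuous_eval)
      (integrable_of_cont hK ρ hρ g.continuous)]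
    have hb : ∀ᵐ x ∂ρ, ‖MvPolynomial.eval x p - g x‖ ≤ ε := hρ.mono fun x hx => (hp x hx).le
    exact norm_integral_le_of_norm_le_const hb
  have hz : |∫ x, g x ∂μ - ∫ x, g x ∂ν| ≤ 0 := by
    apply le_of_forall_pos_le_add
    intro ε hε
    have hM : 0 < μ.real univ + ν.real univ + 1 := by positivity
    obtain ⟨p, hp⟩ := exists_poly_approx hK g g.continuous
      (ε / (μ.real univ + ν.real univ + 1)) (by positivity)
    have h1 := key μ hμ p _ hp
    have h2 := key ν hν p _ hp
    rw [hpoly p] at h1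
    set δ := ε / (μ.real univ + ν.real univ + 1) with hδ
    have hδε : δ * (μ.real univ + ν.real univ + 1) = ε := by
      rw [hδ]; field_simp
    have hδ0 : 0 < δ := by positivity
    rw [abs_le] at h1 h2 ⊢
    constructor <;> nlinarith
  have := abs_nonpos_iff.mp hz
  linarith

lemma pow_tangent (a y : ℝ) (ha : 0 ≤ a) (hy : 0 ≤ y) (m : ℕ) :
    a ^ m + m * (a ^ (m - 1) * (y - a)) ≤ y ^ m := by
  rcases m with _ | m
  · simp
  induction m with
  | zero => simp
  | succ k ih =>
    have h1 := mul_le_mul_of_nonneg_left ih hy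
    have h2 : 0 ≤ a ^ k * (y - a) ^ 2 := by positivity
    have h3 : 0 ≤ (k : ℝ) * (a ^ k * (y - a) ^ 2) := by positivity
    simp only [Nat.add_sub_cancel] at *
    push_cast at *
    have e1 : y ^ (k + 1 + 1) = y * y ^ (k + 1) := by ring
    rw [e1]
    refine le_trans ?_ h1
    have e2 : y * (a ^ (k + 1) + (k + 1) * (a ^ k * (y - a)))
        - (a ^ (k + 1 + 1) + (k + 1 + 1) * (a ^ (k + 1) * (y - a)))
        = a ^ k * (y - a) ^ 2 + k * (a ^ k * (y - a) ^ 2) := by ring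
    linarith

/-- Under the moment matching hypotheses of orders `0` and `1` in `y`,
the trace of the moment matrix of order `r` of `μ = δ_{f(x)}(dy) λ(dx)`, i.e.
`Σ_{|d| ≤ r} μ_{2d}`, is bounded above by the corresponding trace for `φ`. -/
theorem trace_moment_matrix_domination
    (n : ℕ) (hn : 1 ≤ n)
    (X : Set (Fin n → ℝ)) (hXsub : X ⊆ Icc 0 1) (hXc : IsCompact X)
    (γ : ℝ) (hγ : 0 < γ)
    (lam : Measure (Fin n → ℝ)) [IsProbabilityMeasure lam] (hlam : lam Xᶜ = 0)
    (f : (Fin n → ℝ) → ℝ) (hf : Measurable f) (hfY : ∀ x ∈ X, f x ∈ Icc 0 γ)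
    (φ : Measure ((Fin n → ℝ) × ℝ)) [IsFiniteMeasure φ]
    (hφsupp : φ ((X ×ˢ Icc (0:ℝ) γ)ᶜ) = 0)
    (hφint : ∀ d : (Fin n → ℕ) × ℕ,
      Integrable (fun p : (Fin n → ℝ) × ℝ => (∏ i, p.1 i ^ d.1 i) * p.2 ^ d.2) φ)
    (hmom0 : ∀ dx : Fin n → ℕ,
      ∫ p : (Fin n → ℝ) × ℝ, (∏ i, p.1 i ^ dx i) ∂φ = ∫ x, ∏ i, x i ^ dx i ∂lam)
    (hmom1 : ∀ dx : Fin n → ℕ,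
      ∫ p : (Fin n → ℝ) × ℝ, (∏ i, p.1 i ^ dx i) * p.2 ∂φ
        = ∫ x, (∏ i, x i ^ dx i) * f x ∂lam) :
    ∀ r : ℕ,
      ∑ d ∈ idx n r, ∫ x, (∏ i, x i ^ (2 * d.1 i)) * f x ^ (2 * d.2) ∂lam
        ≤ ∑ d ∈ idx n r,
            ∫ p : (Fin n → ℝ) × ℝ, (∏ i, p.1 i ^ (2 * d.1 i)) * p.2 ^ (2 * d.2) ∂φ := by
  intro r
  have hφ : ∀ᵐ p ∂φ, p ∈ X ×ˢ Icc (0:ℝ) γ := hφsupp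
  have hl : ∀ᵐ x ∂lam, x ∈ X := hlam
  have hfst : φ.map Prod.fst = lam := by
    apply meas_ext hXc
    · rw [ae_map_iff (p := fun x => x ∈ X) measurable_fst.aemeasurable hXc.measurableSet]
      exact hφ.mono fun p hp => hp.1
    · exact hl
    · intro d
      rw [integral_map measurable_fst.aemeasurable
        (Continuous.aestronglyMeasurable (by fun_prop)), hmom0]
  have hiy : Integrable (fun p : (Fin n → ℝ) × ℝ => p.2) φ := by
    simpa using hφint (0, 1)
  have hif : Integrable f lam :=
    Integrable.of_bound hf.aestronglyMeasurable γ (hl.mono fun x hx => by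
      rw [Real.norm_eq_abs, abs_of_nonneg (hfY x hx).1]; exact (hfY x hx).2)
  have : IsFiniteMeasure (φ.withDensity fun p => ENNReal.ofReal p.2) :=
    isFiniteMeasure_withDensity_ofReal hiy.2
  have : IsFiniteMeasure (lam.withDensity fun p => ENNReal.ofReal (f p)) :=
    isFiniteMeasure_withDensity_ofReal hif.2
  have hd1 : ∀ g : (Fin n → ℝ) → ℝ, Measurable g →
      ∫ x, g x ∂((φ.withDensity fun p => ENNReal.ofReal p.2).map Prod.fst)
        = ∫ p, g p.1 * p.2 ∂φ := by
    intro g hg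
    rw [integral_map measurable_fst.aemeasurable hg.aestronglyMeasurable,
      integral_withDensity_eq_integral_toReal_smul (by fun_prop) (by simp)]
    apply integral_congr_ae
    filter_upwards [hφ] with p hp
    rw [ENNReal.toReal_ofReal hp.2.1, smul_eq_mul, mul_comm]
  have hd2 : ∀ g : (Fin n → ℝ) → ℝ,
      ∫ x, g x ∂(lam.withDensity fun p => ENNReal.ofReal (f p))
        = ∫ x, g x * f x ∂lam := by
    intro g
    rw [integral_withDensity_eq_integral_toReal_smul (by fun_prop) (by simp)]
    apply integral_congr_ae
    filter_upwards [hl] with p hp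
    rw [ENNReal.toReal_ofReal (hfY p hp).1, smul_eq_mul, mul_comm]
  have hsnd : (φ.withDensity fun p => ENNReal.ofReal p.2).map Prod.fst
      = lam.withDensity fun p => ENNReal.ofReal (f p) := by
    apply meas_ext hXc
    · rw [ae_map_iff (p := fun x => x ∈ X) measurable_fst.aemeasurable hXc.measurableSet]
      exact (withDensity_absolutelyContinuous _ _).ae_le (hφ.mono fun p hp => hp.1)
    · exact (withDensity_absolutelyContinuous _ _).ae_le hl
    · intro d
      rw [hd1 _ (by fun_prop), hd2, hmom1]
  have m0 : ∀ g : (Fin n → ℝ) → ℝ, Measurable g → ∫ p, g p.1 ∂φ = ∫ x, g x ∂lam := by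
    intro g hg
    rw [← hfst, integral_map measurable_fst.aemeasurable hg.aestronglyMeasurable]
  have m1 : ∀ g : (Fin n → ℝ) → ℝ, Measurable g →
      ∫ p, g p.1 * p.2 ∂φ = ∫ x, g x * f x ∂lam := by
    intro g hg
    rw [← hd1 g hg, hsnd, hd2]
  apply Finset.sum_le_sum
  rintro ⟨a, k⟩ _
  dsimp only
  set w : (Fin n → ℝ) → ℝ := fun x => ∏ i, x i ^ (2 * a i) with hw
  have hwm : Measurable w := by fun_prop
  have hw0 : ∀ x, 0 ≤ w x := fun x => Finset.prod_nonneg fun i _ => by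
    rw [pow_mul]; positivity
  obtain ⟨C, hC⟩ := hXc.exists_bound_of_continuousOn (f := w) (by fun_prop)
  have hint : ∀ j l : ℕ, Integrable
      (fun p : (Fin n → ℝ) × ℝ => w p.1 * f p.1 ^ j * p.2 ^ l) φ := by
    intro j l
    refine Integrable.of_bound (Measurable.aestronglyMeasurable (by fun_prop))
      (C * γ ^ j * γ ^ l) (hφ.mono fun p hp => ?_)
    have hf0 := (hfY p.1 hp.1)
    have hy := hp.2
    have hCp := hC p.1 hp.1
    have hC0 : 0 ≤ C := (norm_nonneg _).trans hCp
    rw [norm_mul, norm_mul, norm_pow, norm_pow, Real.norm_of_nonneg hf0.1,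
      Real.norm_of_nonneg hy.1]
    have := hf0.1
    have := hf0.2
    have := hy.1
    have := hy.2
    gcongr
  set G : (Fin n → ℝ) → ℝ := fun x => w x * f x ^ (2 * k - 1) with hG
  have hGm : Measurable G := by fun_prop
  have i1 : Integrable (fun p : (Fin n → ℝ) × ℝ => w p.1 * f p.1 ^ (2 * k)) φ := by
    simpa using hint (2 * k) 0
  have i2 : Integrable (fun p : (Fin n → ℝ) × ℝ => G p.1 * p.2) φ := by
    simpa using hint (2 * k - 1) 1
  have i3 : Integrable (fun p : (Fin n → ℝ) × ℝ => G p.1 * f p.1) φ := by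
    have := hint (2 * k - 1 + 1) 0
    simpa [pow_succ, mul_assoc, hG] using this
  have i4 : Integrable (fun p : (Fin n → ℝ) × ℝ => w p.1 * p.2 ^ (2 * k)) φ := by
    simpa using hint 0 (2 * k)
  have hzero : ∫ p, (G p.1 * p.2 - G p.1 * f p.1) ∂φ = 0 := by
    rw [integral_sub i2 i3, m1 G hGm, m0 (fun x => G x * f x) (by fun_prop), sub_self]
  have i5 : Integrable (fun p : (Fin n → ℝ) × ℝ =>
      ((2 * k : ℕ) : ℝ) * (G p.1 * p.2 - G p.1 * f p.1)) φ := (i2.sub i3).const_mul _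
  have e : ∫ x, w x * f x ^ (2 * k) ∂lam
      = ∫ p, (w p.1 * f p.1 ^ (2 * k)
          + ((2 * k : ℕ) : ℝ) * (G p.1 * p.2 - G p.1 * f p.1)) ∂φ := by
    rw [integral_add i1 i5, integral_const_mul, hzero,
      m0 (fun x => w x * f x ^ (2 * k)) (by fun_prop)]
    simp
  change ∫ x, w x * f x ^ (2 * k) ∂lam ≤ ∫ p : (Fin n → ℝ) × ℝ, w p.1 * p.2 ^ (2 * k) ∂φ
  rw [e]
  refine integral_mono_ae (i1.add i5) i4 ?_
  filter_upwards [hφ] with p hp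
  have := mul_le_mul_of_nonneg_left
    (pow_tangent (f p.1) p.2 (hfY p.1 hp.1).1 hp.2.1 (2 * k)) (hw0 p.1)
  refine le_trans (le_of_eq ?_) this
  simp only [hG]
  ring
end
end

section
/- Let X ⊆ ℝ^n be a compact set (not necessarily contained in the nonnegative orthant), γ > 0, Y = [0,γ], λ a Borel probability measure on X, f : X → Y Borel measurable, and μ the measure dμ(x,y) = δ_{f(x)}(dy)λ(dx) on X×Y with moments μ_d = ∫_X x^{d_x} f(x)^{d_y} dλ(x). If φ is a finite nonnegative Borel measure on X×Y with finite moments φ_d = ∫ x^{d_x} y^{d_y} dφ satisfying φ_{(d_x,0)} = ∫_X x^{d_x} dλ and φ_{(d_x,1)} = μ_{(d_x,1)} for all d_x ∈ ℕ^n, then φ_{(2d_x, d_y)} ≥ μ_{(2d_x, d_y)} for all (d_x,d_y) ∈ ℕ^n × ℕ, i.e. the moment domination holds for all indices whose x-part is even. -/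
open MeasureTheory Set

noncomputable section

theorem aux_pow (a y : ℝ) (ha : 0 ≤ a) (hy : 0 ≤ y) (k : ℕ) :
    a ^ (k+1) + (k+1) * a ^ k * (y - a) ≤ y ^ (k+1) := by
  induction k with
  | zero => simp
  | succ k ih =>
    push_cast
    have h1 := mul_le_mul_of_nonneg_right ih hy
    have h2 : 0 ≤ (k+1) * a ^ k * (y - a)^2 := by positivity
    have h3 : y ^ (k+1+1) = y^(k+1) * y := pow_succ _ _
    rw [h3]
    refine le_trans ?_ h1
    have : (a ^ (k+1) + (k+1) * a ^ k * (y - a)) * y - (a ^ (k+1+1) + ((k+1:ℝ)+1) * a ^ (k+1) * (y - a)) = (k+1) * a ^ k * (y - a)^2 := by ring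
    linarith

theorem aux_meas {n : ℕ} {X : Set (Fin n → ℝ)} (hX : IsCompact X)
    (α β : Measure (Fin n → ℝ)) [IsFiniteMeasure α] [IsFiniteMeasure β]
    (hα : ∀ᵐ x ∂α, x ∈ X) (hβ : ∀ᵐ x ∂β, x ∈ X)
    (h : ∀ d : Fin n → ℕ, ∫ x, ∏ i, x i ^ d i ∂α = ∫ x, ∏ i, x i ^ d i ∂β) : α = β := by
  have hXm : MeasurableSet X := hX.measurableSet
  have : CompactSpace X := isCompact_iff_compactSpace.mp hX
  let c : Fin n → BoundedContinuousFunction X ℝ := fun i =>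
    BoundedContinuousFunction.mkOfCompact ⟨fun x => x.1 i, (continuous_apply i).comp continuous_subtype_val⟩
  let P : MvPolynomial (Fin n) ℝ →ₐ[ℝ] BoundedContinuousFunction X ℝ := MvPolynomial.aeval c
  have hP : ∀ p (x : X), P p x = MvPolynomial.eval x.1 p := by
    intro p x
    induction p using MvPolynomial.induction_on with
    | C a => simp [P, BoundedContinuousFunction.algebraMap_apply]
    | add p q hp hq => simp [hp, hq]
    | mul_X p i hp => simp only [map_mul, BoundedContinuousFunction.mul_apply, hp]; simp [P, c]
  let A : StarSubalgebra ℝ (BoundedContinuousFunction X ℝ) :=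
    { P.range with
      star_mem' := by
        intro a ha
        have : star a = a := by ext x; simp
        rw [this]; exact ha }
  have key : α.comap ((↑) : X → _) = β.comap ((↑) : X → _) := by
    have : IsFiniteMeasure (α.comap ((↑) : X → _)) := inferInstance
    have : IsFiniteMeasure (β.comap ((↑) : X → _)) := inferInstance
    refine ext_of_forall_mem_subalgebra_integral_eq_of_pseudoEMetric_complete_countable
      (𝕜 := ℝ) (A := A) ?_ ?_
    · intro x y hxy
      have : ∃ i, x.1 i ≠ y.1 i := by
        by_contra hc
        push Not at hc
        exact hxy (Subtype.ext (funext hc))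
      obtain ⟨i, hi⟩ := this
      refine ⟨c i, ⟨_, ⟨c i, ⟨MvPolynomial.X i, by simp [P]⟩, rfl⟩, rfl⟩, hi⟩
    · rintro g ⟨p, rfl⟩
      have hint : ∀ ν : Measure (Fin n → ℝ), IsFiniteMeasure ν → (∀ᵐ x ∂ν, x ∈ X) →
          ∫ x, (P p) x ∂(ν.comap ((↑) : X → _)) =
            ∑ d ∈ p.support, p.coeff d * ∫ x, ∏ i, x i ^ d i ∂ν := by
        intro ν _ hν
        simp_rw [hP]
        rw [integral_subtype_comap hXm (fun x => MvPolynomial.eval x p), Measure.restrict_eq_self_of_ae_mem hν]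
        simp_rw [MvPolynomial.eval_eq']
        rw [integral_finsetSum]
        · simp_rw [integral_const_mul]
        · intro d _
          apply Integrable.const_mul
          rw [← Measure.restrict_eq_self_of_ae_mem hν]
          exact ContinuousOn.integrableOn_compact hX (by fun_prop)
      exact (hint α ‹_› hα).trans (Eq.trans (by simp_rw [h]) (hint β ‹_› hβ).symm)
  have := congrArg (Measure.map ((↑) : X → (Fin n → ℝ))) key
  rwa [map_comap_subtype_coe hXm, map_comap_subtype_coe hXm, Measure.restrict_eq_self_of_ae_mem hα,
    Measure.restrict_eq_self_of_ae_mem hβ] at this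


/-- If `X ⊆ ℝ^n` is compact (not necessarily contained in the nonnegative
orthant) and `φ` is a finite nonnegative Borel measure on `X × Y` with finite moments
matching those of `μ = δ_{f(x)}(dy) λ(dx)` at all orders `(d_x, 0)` and `(d_x, 1)`, then
`φ_{(2d_x, d_y)} ≥ μ_{(2d_x, d_y)}` for all `(d_x, d_y) ∈ ℕ^n × ℕ`. -/
theorem moment_domination_even_x
    (n : ℕ) (hn : 1 ≤ n)
    (X : Set (Fin n → ℝ)) (hXc : IsCompact X)
    (γ : ℝ) (hγ : 0 < γ)
    (lam : Measure (Fin n → ℝ)) [IsProbabilityMeasure lam] (hlam : lam Xᶜ = 0)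
    (f : (Fin n → ℝ) → ℝ) (hf : Measurable f) (hfY : ∀ x ∈ X, f x ∈ Icc 0 γ)
    (φ : Measure ((Fin n → ℝ) × ℝ)) [IsFiniteMeasure φ]
    (hφsupp : φ ((X ×ˢ Icc (0:ℝ) γ)ᶜ) = 0)
    (hφint : ∀ d : (Fin n → ℕ) × ℕ,
      Integrable (fun p : (Fin n → ℝ) × ℝ => (∏ i, p.1 i ^ d.1 i) * p.2 ^ d.2) φ)
    (hmom0 : ∀ dx : Fin n → ℕ,
      ∫ p : (Fin n → ℝ) × ℝ, (∏ i, p.1 i ^ dx i) ∂φ = ∫ x, ∏ i, x i ^ dx i ∂lam)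
    (hmom1 : ∀ dx : Fin n → ℕ,
      ∫ p : (Fin n → ℝ) × ℝ, (∏ i, p.1 i ^ dx i) * p.2 ∂φ
        = ∫ x, (∏ i, x i ^ dx i) * f x ∂lam) :
    ∀ d : (Fin n → ℕ) × ℕ,
      ∫ x, (∏ i, x i ^ (2 * d.1 i)) * f x ^ d.2 ∂lam
        ≤ ∫ p : (Fin n → ℝ) × ℝ, (∏ i, p.1 i ^ (2 * d.1 i)) * p.2 ^ d.2 ∂φ := by
  have hlX : ∀ᵐ x ∂lam, x ∈ X := by rw [ae_iff]; exact hlam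
  have hφX : ∀ᵐ p ∂φ, p ∈ X ×ˢ Icc (0:ℝ) γ := by rw [ae_iff]; exact hφsupp
  have hy : Integrable (fun p : (Fin n → ℝ) × ℝ => p.2) φ := by simpa using hφint (0, 1)
  have hfi : Integrable f lam := by
    refine Integrable.of_bound hf.aestronglyMeasurable γ ?_
    filter_upwards [hlX] with x hx
    rw [Real.norm_of_nonneg (hfY x hx).1]; exact (hfY x hx).2
  have hmono : ∀ d : Fin n → ℕ, Measurable (fun x : Fin n → ℝ => ∏ i, x i ^ d i) := by
    intro d; fun_prop
  have E1 : φ.map Prod.fst = lam := by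
    refine aux_meas hXc _ _ ?_ hlX ?_
    · rw [ae_map_iff (p := fun x => x ∈ X) measurable_fst.aemeasurable hXc.measurableSet]
      filter_upwards [hφX] with p hp using hp.1
    · intro d
      rw [integral_map measurable_fst.aemeasurable (hmono d).aestronglyMeasurable]
      exact hmom0 d
  have D1 : ∀ g : (Fin n → ℝ) → ℝ, ∫ p, g p.1 ∂(φ.withDensity fun p => ENNReal.ofReal p.2)
      = ∫ p, g p.1 * p.2 ∂φ := by
    intro g
    rw [integral_withDensity_eq_integral_toReal_smul (by fun_prop) (by simp)]
    apply integral_congr_ae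
    filter_upwards [hφX] with p hp
    simp [ENNReal.toReal_ofReal hp.2.1, mul_comm]
  have D2 : ∀ g : (Fin n → ℝ) → ℝ, ∫ x, g x ∂(lam.withDensity fun x => ENNReal.ofReal (f x))
      = ∫ x, g x * f x ∂lam := by
    intro g
    rw [integral_withDensity_eq_integral_toReal_smul (by fun_prop) (by simp)]
    apply integral_congr_ae
    filter_upwards [hlX] with x hx
    simp [ENNReal.toReal_ofReal (hfY x hx).1, mul_comm]
  have E2 : (φ.withDensity fun p => ENNReal.ofReal p.2).map Prod.fst
      = lam.withDensity fun x => ENNReal.ofReal (f x) := by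
    have := isFiniteMeasure_withDensity_ofReal hy.2
    have := isFiniteMeasure_withDensity_ofReal hfi.2
    refine aux_meas hXc _ _ ?_ ?_ ?_
    · rw [ae_map_iff (p := fun x => x ∈ X) measurable_fst.aemeasurable hXc.measurableSet]
      refine (withDensity_absolutelyContinuous _ _).ae_le ?_
      filter_upwards [hφX] with p hp using hp.1
    · exact (withDensity_absolutelyContinuous _ _).ae_le hlX
    · intro d
      rw [integral_map measurable_fst.aemeasurable (hmono d).aestronglyMeasurable,
        D1 (fun x => ∏ i, x i ^ d i), D2 (fun x => ∏ i, x i ^ d i)]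
      exact hmom1 d
  have F1 : ∀ g : (Fin n → ℝ) → ℝ, Measurable g → ∫ p, g p.1 ∂φ = ∫ x, g x ∂lam := by
    intro g hg
    rw [← E1, integral_map measurable_fst.aemeasurable hg.aestronglyMeasurable]
  have F2 : ∀ g : (Fin n → ℝ) → ℝ, Measurable g →
      ∫ p, g p.1 * p.2 ∂φ = ∫ x, g x * f x ∂lam := by
    intro g hg
    rw [← D1, ← D2, ← E2, integral_map measurable_fst.aemeasurable hg.aestronglyMeasurable]
  rintro ⟨d, k⟩
  have hI : ∀ j l : ℕ, Integrable (fun p : (Fin n → ℝ) × ℝ =>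
      f p.1 ^ j * ((∏ i, p.1 i ^ (2 * d i)) * p.2 ^ l)) φ := by
    intro j l
    refine Integrable.bdd_mul (c := γ ^ j) (hφint (fun i => 2 * d i, l)) ?_ ?_
    · exact ((hf.comp measurable_fst).pow_const j).aestronglyMeasurable
    · filter_upwards [hφX] with p hp
      have h := hfY p.1 hp.1
      rw [norm_pow, Real.norm_of_nonneg h.1]
      exact pow_le_pow_left₀ h.1 h.2 j
  have hM := hmono (fun i => 2 * d i)
  cases k with
  | zero => simpa using (hmom0 (fun i => 2 * d i)).ge
  | succ k =>
    dsimp only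
    have a1 := F1 (fun x => (∏ i, x i ^ (2 * d i)) * f x ^ (k+1)) (hM.mul (hf.pow_const _))
    have a2 := F2 (fun x => (∏ i, x i ^ (2 * d i)) * f x ^ k) (hM.mul (hf.pow_const _))
    have a3 : ∫ x, (∏ i, x i ^ (2 * d i)) * f x ^ k * f x ∂lam
        = ∫ x, (∏ i, x i ^ (2 * d i)) * f x ^ (k+1) ∂lam := by
      congr 1; ext x; ring
    have i1 : Integrable (fun p : (Fin n → ℝ) × ℝ =>
        (∏ i, p.1 i ^ (2 * d i)) * f p.1 ^ (k+1)) φ := by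
      refine (hI (k+1) 0).congr (ae_of_all _ fun p => ?_); dsimp only; ring
    have i2 : Integrable (fun p : (Fin n → ℝ) × ℝ =>
        (∏ i, p.1 i ^ (2 * d i)) * f p.1 ^ k * p.2) φ := by
      refine (hI k 1).congr (ae_of_all _ fun p => ?_); dsimp only; ring
    have i3 := hφint (fun i => 2 * d i, k+1)
    have main := integral_mono_ae (i1.add ((i2.sub i1).const_mul ((k:ℝ)+1))) i3 (by
      filter_upwards [hφX] with p hp
      have h := aux_pow (f p.1) p.2 (hfY p.1 hp.1).1 hp.2.1 k
      have hM0 : 0 ≤ ∏ i, p.1 i ^ (2 * d i) :=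
        Finset.prod_nonneg fun i _ => (even_two_mul (d i)).pow_nonneg _
      refine le_trans (le_of_eq ?_) (mul_le_mul_of_nonneg_left h hM0)
      simp only [Pi.add_apply, Pi.sub_apply]
      ring)
    rw [integral_add' i1 ((i2.sub i1).const_mul _), integral_const_mul, integral_sub' i2 i1,
      a1, a2, a3, sub_self, mul_zero, add_zero] at main
    exact main
end
end

section
/- There is no duality gap between the primal linear program and its dual: inf { ∫_{X×Y} T dφ : φ a finite nonnegative Borel measure on X×Y with ∫ x^{d_x} y^{d_y} dφ = μ_{(d_x,d_y)} for all (d_x,d_y) ∈ D } equals sup { ∫_X (h₁(x) + h₂(x) f(x)) dλ(x) : h₁, h₂ continuous real-valued functions on X such that h₁(x) + h₂(x)·y ≤ T(x,y) for all (x,y) ∈ X×Y }. -/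
open MeasureTheory Set

noncomputable section

theorem ndg_tangent (k : ℕ) (y g : ℝ) (hy : 0 ≤ y) (hg : 0 ≤ g) :
    g ^ k + k * g ^ (k - 1) * (y - g) ≤ y ^ k := by
  rcases k with _ | k
  · simp
  induction k with
  | zero => simp
  | succ k ih =>
    simp only [Nat.add_sub_cancel] at ih ⊢
    have h1 := mul_le_mul_of_nonneg_left ih hy
    have h2 : 0 ≤ ((k:ℝ) + 1) * g ^ k * (y - g) ^ 2 := by positivity
    have h3 : y ^ (k + 1 + 1) = y * y ^ (k + 1) := by ring
    rw [h3]
    refine le_trans ?_ h1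
    push_cast
    have : y * (g ^ (k + 1) + (↑k + 1) * g ^ k * (y - g)) -
      (g ^ (k + 1 + 1) + ((k:ℝ) + 1 + 1) * g ^ (k + 1) * (y - g)) =
        ((k:ℝ) + 1) * g ^ k * (y - g) ^ 2 := by ring
    linarith

theorem ndg_error (k : ℕ) (y g M : ℝ) (hy : 0 ≤ y) (hg : 0 ≤ g) (hyM : y ≤ M) (hgM : g ≤ M) :
    y ^ k ≤ g ^ k + k * g ^ (k - 1) * (y - g) + k * M ^ (k - 1) * |y - g| := by
  have h := ndg_tangent k g y hg hy
  have a1 : y ^ (k - 1) ≤ M ^ (k - 1) := pow_le_pow_left₀ hy hyM _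
  have a2 : g ^ (k - 1) ≤ M ^ (k - 1) := pow_le_pow_left₀ hg hgM _
  have b1 : 0 ≤ y ^ (k - 1) := by positivity
  have b2 : 0 ≤ g ^ (k - 1) := by positivity
  have c : (y ^ (k - 1) - g ^ (k - 1)) * (y - g) ≤ M ^ (k - 1) * |y - g| := by
    calc _ ≤ |(y ^ (k - 1) - g ^ (k - 1)) * (y - g)| := le_abs_self _
      _ = |y ^ (k - 1) - g ^ (k - 1)| * |y - g| := abs_mul _ _
      _ ≤ _ := by
        gcongr
        rw [abs_le]; constructor <;> linarith
  have c' := mul_le_mul_of_nonneg_left c (Nat.cast_nonneg (α := ℝ) k)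
  nlinarith

theorem ndg_integrable {α : Type*} [TopologicalSpace α] [T2Space α] [MeasurableSpace α]
    [OpensMeasurableSpace α] [SecondCountableTopology α] [TopologicalSpace.PseudoMetrizableSpace α]
    (φ : Measure α) [IsFiniteMeasure φ] (K : Set α) (hK : IsCompact K) (h0 : φ Kᶜ = 0)
    (F : α → ℝ) (hF : ContinuousOn F K) : Integrable F φ := by
  have h := hF.integrableOn_compact (μ := φ) hK
  rwa [IntegrableOn, Measure.restrict_eq_self_of_ae_mem] at h
  exact h0

theorem ndg_approx (n : ℕ)
    (X : Set (Fin n → ℝ)) (hXc : IsCompact X)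
    (γ : ℝ) (hγ : 0 < γ)
    (lam : Measure (Fin n → ℝ)) [IsProbabilityMeasure lam] (hlam : lam Xᶜ = 0)
    (f : (Fin n → ℝ) → ℝ) (hf : Measurable f) (hfY : ∀ x ∈ X, f x ∈ Icc 0 γ)
    (ε : ℝ) (hε : 0 < ε) : ∃ P : MvPolynomial (Fin n) ℝ,
      (∀ x ∈ X, 0 ≤ MvPolynomial.eval x P ∧ MvPolynomial.eval x P ≤ γ + 1) ∧
      ∫ x, |f x - MvPolynomial.eval x P| ∂lam ≤ ε := by
  have hae : ∀ᵐ x ∂lam, x ∈ X := hlam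
  have hfi : Integrable f lam := by
    refine Integrable.of_bound hf.aestronglyMeasurable γ ?_
    filter_upwards [hae] with x hx
    have := hfY x hx
    rw [Real.norm_eq_abs, abs_of_nonneg this.1]; exact this.2
  obtain ⟨g, hg, hgi⟩ := hfi.exists_boundedContinuous_integral_sub_le (half_pos hε)
  obtain ⟨δ, hδ0, hδ1, hδ2⟩ : ∃ δ : ℝ, 0 < δ ∧ 2 * δ ≤ 1 ∧ 2 * δ ≤ ε / 2 :=
    ⟨min (1/2) (ε/4), by positivity, by linarith [min_le_left (1/2) (ε/4)],
      by linarith [min_le_right (1/2) (ε/4)]⟩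
  let c : C(Fin n → ℝ, ℝ) := ⟨fun x => max 0 (min (g x) γ), by fun_prop⟩
  let A : Subalgebra ℝ C(Fin n → ℝ, ℝ) :=
    (MvPolynomial.aeval (R := ℝ) (fun i : Fin n => (⟨fun x => x i, by fun_prop⟩ : C(Fin n → ℝ, ℝ)))).range
  have hA : A.SeparatesPoints := by
    intro x y hxy
    obtain ⟨i, hi⟩ := Function.ne_iff.mp hxy
    refine ⟨fun x => x i, ⟨⟨fun x => x i, by fun_prop⟩, ⟨MvPolynomial.X i, ?_⟩, rfl⟩, hi⟩
    simp
  obtain ⟨q, ⟨P, hP⟩, hq⟩ :=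
    ContinuousMap.exists_mem_subalgebra_near_continuous_of_isCompact_of_separatesPoints hA c hXc hδ0
  have hev : ∀ x, q x = MvPolynomial.eval x P := by
    intro x
    rw [← hP]
    clear hP
    change (MvPolynomial.aeval _ P : C(Fin n → ℝ, ℝ)) x = _
    induction P using MvPolynomial.induction_on with
    | C a => simp
    | add p q hp hq => rw [map_add, map_add, ContinuousMap.add_apply, hp, hq]
    | mul_X p i hp => 
      rw [map_mul, map_mul, ContinuousMap.mul_apply, hp, MvPolynomial.aeval_X,
        MvPolynomial.eval_X]
      rfl
  have hc0 : ∀ x, 0 ≤ c x ∧ c x ≤ γ := fun x =>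
    ⟨le_max_left _ _, max_le hγ.le (min_le_right _ _)⟩
  have hb : ∀ x ∈ X, |MvPolynomial.eval x P - c x| < δ := by
    intro x hx
    have := hq x hx
    rwa [hev] at this
  refine ⟨P + MvPolynomial.C δ, ?_, ?_⟩
  · intro x hx
    have h1 := abs_lt.mp (hb x hx)
    have h2 := hc0 x
    simp only [map_add, MvPolynomial.eval_C]
    constructor <;> linarith
  · have : ∫ x, |f x - MvPolynomial.eval x (P + MvPolynomial.C δ)| ∂lam
        ≤ ∫ x, (‖f x - g x‖ + 2 * δ) ∂lam := by
      apply integral_mono_ae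
      · apply Integrable.abs
        apply hfi.sub
        exact ndg_integrable lam X hXc hlam _ (MvPolynomial.continuous_eval _).continuousOn
      · exact (hfi.sub hgi).norm.add (integrable_const _)
      · filter_upwards [hae] with x hx
        have h1 := abs_lt.mp (hb x hx)
        have h2 := hfY x hx
        have h3 : |f x - c x| ≤ |f x - g x| := by
          change |f x - max 0 (min (g x) γ)| ≤ _
          rcases h2 with ⟨h2, h2'⟩
          rcases le_total (g x) γ with h | h
          · rw [min_eq_left h]
            rcases le_total 0 (g x) with h' | h'
            · rw [max_eq_right h']
            · rw [max_eq_left h', abs_of_nonneg (by linarith), abs_of_nonneg (by linarith)]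
              linarith
          · rw [min_eq_right h, max_eq_right hγ.le, abs_of_nonpos (by linarith),
              abs_of_nonpos (by linarith)]
            linarith
        simp only [map_add, MvPolynomial.eval_C, Real.norm_eq_abs]
        have h4 := abs_le.mp h3
        rw [abs_le]
        constructor <;> linarith [h4.1, h4.2]
    refine this.trans ?_
    have hn : Integrable (fun x => ‖f x - g x‖) lam := (hfi.sub hgi).norm
    rw [integral_add hn (integrable_const _), integral_const]
    simp only [probReal_univ, one_smul]
    linarith

theorem ndg_key (n : ℕ)
    (X : Set (Fin n → ℝ)) (hXsub : X ⊆ Icc 0 1) (hXc : IsCompact X)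
    (γ : ℝ) (hγ : 0 < γ)
    (μ : Measure ((Fin n → ℝ) × ℝ)) [IsFiniteMeasure μ] (hμ : μ (X ×ˢ Icc (0:ℝ) γ)ᶜ = 0)
    (hap : ∀ ε : ℝ, 0 < ε → ∃ P : MvPolynomial (Fin n) ℝ,
      (∀ x ∈ X, 0 ≤ MvPolynomial.eval x P ∧ MvPolynomial.eval x P ≤ γ + 1) ∧
      ∫ p : (Fin n → ℝ) × ℝ, |p.2 - MvPolynomial.eval p.1 P| ∂μ ≤ ε)
    (θ : ((Fin n → ℕ) × ℕ) → ℝ) (hθ : ∀ d, 0 ≤ θ d)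
    (T : (Fin n → ℝ) × ℝ → ℝ)
    (hTs : ∀ p ∈ X ×ˢ Icc (0:ℝ) γ,
      HasSum (fun d : (Fin n → ℕ) × ℕ => θ d * ((∏ i, p.1 i ^ d.1 i) * p.2 ^ d.2)) (T p))
    (hTi : HasSum (fun d : (Fin n → ℕ) × ℕ =>
      ∫ p : (Fin n → ℝ) × ℝ, θ d * ((∏ i, p.1 i ^ d.1 i) * p.2 ^ d.2) ∂μ) (∫ p, T p ∂μ))
    (ε : ℝ) (hε : 0 < ε) :
    ∃ P₁ P₂ : MvPolynomial (Fin n) ℝ,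
      (∀ p ∈ X ×ˢ Icc (0:ℝ) γ,
        MvPolynomial.eval p.1 P₁ + MvPolynomial.eval p.1 P₂ * p.2 ≤ T p) ∧
      ∫ p, T p ∂μ - ε ≤
        ∫ p : (Fin n → ℝ) × ℝ, (MvPolynomial.eval p.1 P₁ + MvPolynomial.eval p.1 P₂ * p.2) ∂μ := by
  have hK : IsCompact (X ×ˢ Icc (0:ℝ) γ) := hXc.prod isCompact_Icc
  have hae : ∀ᵐ p ∂μ, p ∈ X ×ˢ Icc (0:ℝ) γ := hμ
  have hcont : ∀ d : (Fin n → ℕ) × ℕ, Continuous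
      (fun p : (Fin n → ℝ) × ℝ => θ d * ((∏ i, p.1 i ^ d.1 i) * p.2 ^ d.2)) := by
    intro d; fun_prop
  have hpc : ∀ P : MvPolynomial (Fin n) ℝ, Continuous
      (fun p : (Fin n → ℝ) × ℝ => MvPolynomial.eval p.1 P) := fun P =>
    (MvPolynomial.continuous_eval P).comp continuous_fst
  obtain ⟨s, hs⟩ := (hTi.eventually (lt_mem_nhds (show ∫ p, T p ∂μ - ε / 2 < ∫ p, T p ∂μ by
    linarith))).exists
  set C : ℝ := ∑ d ∈ s, θ d * (d.2 * (γ + 1) ^ (d.2 - 1)) with hC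
  have hC0 : 0 ≤ C := Finset.sum_nonneg fun d _ => mul_nonneg (hθ d) (by positivity)
  obtain ⟨P, hP, hPi⟩ := hap (ε / 2 / (C + 1)) (by positivity)
  let mon : (Fin n → ℕ) → MvPolynomial (Fin n) ℝ := fun d => ∏ i, MvPolynomial.X i ^ d i
  let P₂ : MvPolynomial (Fin n) ℝ := ∑ d ∈ s, MvPolynomial.C (θ d) *
    (mon d.1 * (MvPolynomial.C (d.2 : ℝ) * P ^ (d.2 - 1)))
  let P₁ : MvPolynomial (Fin n) ℝ := ∑ d ∈ s, MvPolynomial.C (θ d) *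
    (mon d.1 * (P ^ d.2 - MvPolynomial.C (d.2 : ℝ) * P ^ (d.2 - 1) * P))
  have hL : ∀ p : (Fin n → ℝ) × ℝ,
      MvPolynomial.eval p.1 P₁ + MvPolynomial.eval p.1 P₂ * p.2 =
      ∑ d ∈ s, θ d * ((∏ i, p.1 i ^ d.1 i) * ((MvPolynomial.eval p.1 P) ^ d.2 +
        d.2 * (MvPolynomial.eval p.1 P) ^ (d.2 - 1) * (p.2 - MvPolynomial.eval p.1 P))) := by
    intro p
    simp only [P₁, P₂, mon, map_sum, map_mul, map_prod, map_pow, map_sub, MvPolynomial.eval_C,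
      MvPolynomial.eval_X, Finset.sum_mul, ← Finset.sum_add_distrib]
    refine Finset.sum_congr rfl fun d _ => ?_
    ring
  have hm0 : ∀ x ∈ X, ∀ d : Fin n → ℕ, 0 ≤ ∏ i, x i ^ d i := fun x hx d =>
    Finset.prod_nonneg fun i _ => pow_nonneg ((hXsub hx).1 i) _
  have hm1 : ∀ x ∈ X, ∀ d : Fin n → ℕ, ∏ i, x i ^ d i ≤ 1 := fun x hx d =>
    Finset.prod_le_one (fun i _ => pow_nonneg ((hXsub hx).1 i) _)
      fun i _ => pow_le_one₀ ((hXsub hx).1 i) ((hXsub hx).2 i)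
  refine ⟨P₁, P₂, ?_, ?_⟩
  · intro p hp
    rw [hL]
    refine le_trans ?_ (sum_le_hasSum s (fun d _ => ?_) (hTs p hp))
    · refine Finset.sum_le_sum fun d _ => ?_
      refine mul_le_mul_of_nonneg_left ?_ (hθ d)
      refine mul_le_mul_of_nonneg_left ?_ (hm0 _ hp.1 _)
      exact ndg_tangent _ _ _ hp.2.1 (hP _ hp.1).1
    · exact mul_nonneg (hθ d) (mul_nonneg (hm0 _ hp.1 _) (pow_nonneg hp.2.1 _))
  · have hi1 : Integrable (fun p : (Fin n → ℝ) × ℝ =>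
        MvPolynomial.eval p.1 P₁ + MvPolynomial.eval p.1 P₂ * p.2) μ :=
      ndg_integrable μ _ hK hμ _
        (((hpc P₁).add ((hpc P₂).mul continuous_snd)).continuousOn)
    have hi2 : Integrable (fun p : (Fin n → ℝ) × ℝ =>
        C * |p.2 - MvPolynomial.eval p.1 P|) μ :=
      ndg_integrable μ _ hK hμ _
        ((continuous_const.mul (continuous_snd.sub (hpc P)).abs).continuousOn)
    have hd : ∀ d ∈ s, Integrable
      (fun p : (Fin n → ℝ) × ℝ => θ d * ((∏ i, p.1 i ^ d.1 i) * p.2 ^ d.2)) μ := fun d _ =>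
      ndg_integrable μ _ hK hμ _ (hcont d).continuousOn
    rw [← integral_finsetSum s hd] at hs
    have hle : ∫ p : (Fin n → ℝ) × ℝ, ∑ d ∈ s, θ d * ((∏ i, p.1 i ^ d.1 i) * p.2 ^ d.2) ∂μ ≤
        ∫ p : (Fin n → ℝ) × ℝ, ((MvPolynomial.eval p.1 P₁ + MvPolynomial.eval p.1 P₂ * p.2) +
          C * |p.2 - MvPolynomial.eval p.1 P|) ∂μ := by
      refine integral_mono_ae (integrable_finsetSum _ hd) (hi1.add hi2) ?_
      filter_upwards [hae] with p hp
      rw [hL, hC, Finset.sum_mul, ← Finset.sum_add_distrib]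
      refine Finset.sum_le_sum fun d _ => ?_
      have he := ndg_error d.2 p.2 (MvPolynomial.eval p.1 P) (γ + 1) hp.2.1 (hP _ hp.1).1
        (by linarith [hp.2.2]) (hP _ hp.1).2
      have h1 := mul_le_mul_of_nonneg_left he (hm0 _ hp.1 d.1)
      have h2 : (∏ i, p.1 i ^ d.1 i) * (d.2 * (γ + 1) ^ (d.2 - 1) * |p.2 - MvPolynomial.eval p.1 P|)
        ≤ d.2 * (γ + 1) ^ (d.2 - 1) * |p.2 - MvPolynomial.eval p.1 P| :=
        mul_le_of_le_one_left (by positivity) (hm1 _ hp.1 d.1)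
      rw [mul_add] at h1
      have h3 := mul_le_mul_of_nonneg_left (h1.trans (add_le_add_right h2 _)) (hθ d)
      rw [mul_add] at h3
      rw [mul_assoc (θ d)]
      exact h3
    rw [integral_add hi1 hi2, integral_const_mul] at hle
    have h5 : C * ∫ p : (Fin n → ℝ) × ℝ, |p.2 - MvPolynomial.eval p.1 P| ∂μ ≤ ε / 2 := by
      calc _ ≤ C * (ε / 2 / (C + 1)) := mul_le_mul_of_nonneg_left hPi hC0
        _ ≤ (C + 1) * (ε / 2 / (C + 1)) := by gcongr; linarith
        _ = ε / 2 := by field_simp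
    linarith

theorem ndg_poly (n : ℕ)
    (X : Set (Fin n → ℝ)) (hXc : IsCompact X) (γ : ℝ)
    (μ φ : Measure ((Fin n → ℝ) × ℝ)) [IsFiniteMeasure μ] [IsFiniteMeasure φ]
    (hμ : μ (X ×ˢ Icc (0:ℝ) γ)ᶜ = 0) (hφ : φ (X ×ˢ Icc (0:ℝ) γ)ᶜ = 0)
    (h : ∀ d : (Fin n → ℕ) × ℕ, d.2 ≤ 1 →
          ∫ p : (Fin n → ℝ) × ℝ, (∏ i, p.1 i ^ d.1 i) * p.2 ^ d.2 ∂φ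
            = ∫ p : (Fin n → ℝ) × ℝ, (∏ i, p.1 i ^ d.1 i) * p.2 ^ d.2 ∂μ)
    (k : ℕ) (hk : k ≤ 1) (P : MvPolynomial (Fin n) ℝ) :
    ∫ p : (Fin n → ℝ) × ℝ, MvPolynomial.eval p.1 P * p.2 ^ k ∂φ =
    ∫ p : (Fin n → ℝ) × ℝ, MvPolynomial.eval p.1 P * p.2 ^ k ∂μ := by
  have hK : IsCompact (X ×ˢ Icc (0:ℝ) γ) := hXc.prod isCompact_Icc
  simp only [MvPolynomial.eval_eq', Finset.sum_mul]
  rw [integral_finsetSum, integral_finsetSum]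
  · refine Finset.sum_congr rfl fun d _ => ?_
    simp only [mul_assoc]
    rw [integral_const_mul, integral_const_mul]
    congr 1
    exact h (fun i => d i, k) hk
  · intro d _
    exact ndg_integrable μ _ hK hμ _ (by fun_prop)
  · intro d _
    exact ndg_integrable φ _ hK hφ _ (by fun_prop)

/-- No duality gap between the primal LP over measures (minimize `∫ T dφ`
subject to matching the moments of `μ = δ_{f(x)}(dy) λ(dx)` of index `(d_x, d_y)` with
`d_y ≤ 1`) and its dual LP over pairs of continuous functions `h₁, h₂` on `X` satisfying
`h₁(x) + h₂(x)·y ≤ T(x,y)` on `X × Y`. -/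
theorem no_duality_gap
    (n : ℕ) (hn : 1 ≤ n)
    (X : Set (Fin n → ℝ)) (hXsub : X ⊆ Icc 0 1) (hXc : IsCompact X)
    (γ : ℝ) (hγ : 0 < γ)
    (lam : Measure (Fin n → ℝ)) [IsProbabilityMeasure lam] (hlam : lam Xᶜ = 0)
    (f : (Fin n → ℝ) → ℝ) (hf : Measurable f) (hfY : ∀ x ∈ X, f x ∈ Icc 0 γ)
    (θ : ((Fin n → ℕ) × ℕ) → ℝ) (hθ : ∀ d, 0 ≤ θ d)
    (hsum : Summable fun d : (Fin n → ℕ) × ℕ => θ d * max 1 γ ^ d.2)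
    (T : (Fin n → ℝ) × ℝ → ℝ)
    (hT : ∀ p : (Fin n → ℝ) × ℝ,
      T p = ∑' d : (Fin n → ℕ) × ℕ, θ d * ((∏ i, p.1 i ^ d.1 i) * p.2 ^ d.2)) :
    sInf {v : ℝ | ∃ φ : Measure ((Fin n → ℝ) × ℝ), IsFiniteMeasure φ ∧
        φ ((X ×ˢ Icc (0:ℝ) γ)ᶜ) = 0 ∧
        (∀ d : (Fin n → ℕ) × ℕ, d.2 ≤ 1 →
          ∫ p : (Fin n → ℝ) × ℝ, (∏ i, p.1 i ^ d.1 i) * p.2 ^ d.2 ∂φ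
            = ∫ x, (∏ i, x i ^ d.1 i) * f x ^ d.2 ∂lam) ∧
        v = ∫ p, T p ∂φ}
      = sSup {w : ℝ | ∃ h₁ h₂ : (Fin n → ℝ) → ℝ, ContinuousOn h₁ X ∧ ContinuousOn h₂ X ∧
          (∀ x ∈ X, ∀ y ∈ Icc (0:ℝ) γ, h₁ x + h₂ x * y ≤ T (x, y)) ∧
          w = ∫ x, (h₁ x + h₂ x * f x) ∂lam} := by
  classical
  have hK : IsCompact (X ×ˢ Icc (0:ℝ) γ) := hXc.prod isCompact_Icc
  have hKm : MeasurableSet (X ×ˢ Icc (0:ℝ) γ) := hK.measurableSet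
  have haeX : ∀ᵐ x ∂lam, x ∈ X := hlam
  have hG : Measurable (fun x => (x, f x)) := measurable_id.prodMk hf
  set μ : Measure ((Fin n → ℝ) × ℝ) := lam.map (fun x => (x, f x)) with hμdef
  haveI : IsProbabilityMeasure μ := Measure.isProbabilityMeasure_map hG.aemeasurable
  have hμ : μ (X ×ˢ Icc (0:ℝ) γ)ᶜ = 0 := by
    rw [hμdef, Measure.map_apply hG hKm.compl]
    refine measure_mono_null ?_ hlam
    intro x hx hxX
    exact hx ⟨hxX, hfY x hxX⟩
  have haeμ : ∀ᵐ p ∂μ, p ∈ X ×ˢ Icc (0:ℝ) γ := hμ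
  have hint : ∀ F : (Fin n → ℝ) × ℝ → ℝ, ContinuousOn F (X ×ˢ Icc (0:ℝ) γ) →
      ∫ p, F p ∂μ = ∫ x, F (x, f x) ∂lam := by
    intro F hF
    exact integral_map hG.aemeasurable (ndg_integrable μ _ hK hμ F hF).aestronglyMeasurable
  have hbd : ∀ (d : (Fin n → ℕ) × ℕ), ∀ p ∈ X ×ˢ Icc (0:ℝ) γ,
      ‖θ d * ((∏ i, p.1 i ^ d.1 i) * p.2 ^ d.2)‖ ≤ θ d * max 1 γ ^ d.2 := by
    intro d p hp
    have a0 : 0 ≤ ∏ i, p.1 i ^ d.1 i :=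
      Finset.prod_nonneg fun i _ => pow_nonneg ((hXsub hp.1).1 i) _
    have a1 : ∏ i, p.1 i ^ d.1 i ≤ 1 :=
      Finset.prod_le_one (fun i _ => pow_nonneg ((hXsub hp.1).1 i) _)
        fun i _ => pow_le_one₀ ((hXsub hp.1).1 i) ((hXsub hp.1).2 i)
    have a2 : 0 ≤ p.2 ^ d.2 := pow_nonneg hp.2.1 _
    have a3 : p.2 ^ d.2 ≤ max 1 γ ^ d.2 :=
      pow_le_pow_left₀ hp.2.1 (hp.2.2.trans (le_max_right _ _)) _
    rw [Real.norm_of_nonneg (mul_nonneg (hθ d) (mul_nonneg a0 a2))]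
    exact mul_le_mul_of_nonneg_left ((mul_le_of_le_one_left a2 a1).trans a3) (hθ d)
  have hcont : ∀ d : (Fin n → ℕ) × ℕ, Continuous
      (fun p : (Fin n → ℝ) × ℝ => θ d * ((∏ i, p.1 i ^ d.1 i) * p.2 ^ d.2)) := by
    intro d; fun_prop
  have hTeq : T = fun p => ∑' d : (Fin n → ℕ) × ℕ, θ d * ((∏ i, p.1 i ^ d.1 i) * p.2 ^ d.2) :=
    funext hT
  have hTc : ContinuousOn T (X ×ˢ Icc (0:ℝ) γ) := by
    rw [hTeq]
    exact continuousOn_tsum (fun d => (hcont d).continuousOn) hsum hbd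
  have hTs : ∀ p ∈ X ×ˢ Icc (0:ℝ) γ,
      HasSum (fun d : (Fin n → ℕ) × ℕ => θ d * ((∏ i, p.1 i ^ d.1 i) * p.2 ^ d.2)) (T p) := by
    intro p hp
    rw [hT p]
    exact (Summable.of_norm_bounded hsum (fun d => hbd d p hp)).hasSum
  have hTi : HasSum (fun d : (Fin n → ℕ) × ℕ =>
      ∫ p : (Fin n → ℝ) × ℝ, θ d * ((∏ i, p.1 i ^ d.1 i) * p.2 ^ d.2) ∂μ) (∫ p, T p ∂μ) := by
    refine hasSum_integral_of_dominated_convergence (fun d _ => θ d * max 1 γ ^ d.2)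
      (fun d => (hcont d).aestronglyMeasurable) ?_ ?_ (integrable_const _) ?_
    · intro d
      filter_upwards [haeμ] with p hp using hbd d p hp
    · exact Filter.Eventually.of_forall fun _ => hsum
    · filter_upwards [haeμ] with p hp using hTs p hp
  have hap : ∀ ε : ℝ, 0 < ε → ∃ P : MvPolynomial (Fin n) ℝ,
      (∀ x ∈ X, 0 ≤ MvPolynomial.eval x P ∧ MvPolynomial.eval x P ≤ γ + 1) ∧
      ∫ p : (Fin n → ℝ) × ℝ, |p.2 - MvPolynomial.eval p.1 P| ∂μ ≤ ε := by
    intro ε hε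
    obtain ⟨P, h1, h2⟩ := ndg_approx n X hXc γ hγ lam hlam f hf hfY ε hε
    refine ⟨P, h1, ?_⟩
    rw [hint]
    · exact h2
    · exact (continuous_snd.sub
        ((MvPolynomial.continuous_eval P).comp continuous_fst)).abs.continuousOn
  have hkey := ndg_key n X hXsub hXc γ hγ μ hμ hap θ hθ T hTs hTi
  have hpc : ∀ P : MvPolynomial (Fin n) ℝ, Continuous
      (fun p : (Fin n → ℝ) × ℝ => MvPolynomial.eval p.1 P) := fun P =>
    (MvPolynomial.continuous_eval P).comp continuous_fst
  have hmom : ∀ d : (Fin n → ℕ) × ℕ,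
      ∫ p : (Fin n → ℝ) × ℝ, (∏ i, p.1 i ^ d.1 i) * p.2 ^ d.2 ∂μ
            = ∫ x, (∏ i, x i ^ d.1 i) * f x ^ d.2 ∂lam := by
    intro d
    exact hint (fun p => (∏ i, p.1 i ^ d.1 i) * p.2 ^ d.2) (by fun_prop)
  trans (∫ p, T p ∂μ)
  · apply IsLeast.csInf_eq
    refine ⟨⟨μ, inferInstance, hμ, fun d _ => hmom d, rfl⟩, ?_⟩
    rintro v ⟨φ, hφf, hφ, hφm, rfl⟩
    refine le_of_forall_pos_sub_le fun ε hε => ?_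
    obtain ⟨P₁, P₂, hle, hge⟩ := hkey ε hε
    refine hge.trans ?_
    have hpoly := ndg_poly n X hXc γ μ φ hμ hφ (fun d hd => (hφm d hd).trans (hmom d).symm)
    have e1 := hpoly 0 (by norm_num) P₁
    have e2 := hpoly 1 le_rfl P₂
    simp only [pow_zero, mul_one, pow_one] at e1 e2
    have c1 := (hpc P₁).continuousOn (s := X ×ˢ Icc (0:ℝ) γ)
    have c2 : ContinuousOn (fun p : (Fin n → ℝ) × ℝ => MvPolynomial.eval p.1 P₂ * p.2)
        (X ×ˢ Icc (0:ℝ) γ) := ((hpc P₂).mul continuous_snd).continuousOn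
    rw [integral_add (ndg_integrable μ _ hK hμ _ c1) (ndg_integrable μ _ hK hμ _ c2), ← e1, ← e2,
      ← integral_add (ndg_integrable φ _ hK hφ _ c1) (ndg_integrable φ _ hK hφ _ c2)]
    refine integral_mono_ae (ndg_integrable φ _ hK hφ _ (c1.add c2))
      (ndg_integrable φ _ hK hφ _ hTc) ?_
    have haeφ : ∀ᵐ p ∂φ, p ∈ X ×ˢ Icc (0:ℝ) γ := hφ
    filter_upwards [haeφ] with p hp using hle p hp
  · symm
    apply IsLUB.csSup_eq
    · constructor
      · rintro w ⟨h₁, h₂, hc1, hc2, hle, rfl⟩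
        have hc : ContinuousOn (fun p : (Fin n → ℝ) × ℝ => h₁ p.1 + h₂ p.1 * p.2)
            (X ×ˢ Icc (0:ℝ) γ) := by
          have m : MapsTo Prod.fst (X ×ˢ Icc (0:ℝ) γ) X := fun p hp => hp.1
          exact (hc1.comp continuousOn_fst m).add
            ((hc2.comp continuousOn_fst m).mul continuousOn_snd)
        rw [← hint (fun p => h₁ p.1 + h₂ p.1 * p.2) hc]
        refine integral_mono_ae (ndg_integrable μ _ hK hμ _ hc) (ndg_integrable μ _ hK hμ _ hTc) ?_
        filter_upwards [haeμ] with p hp using hle p.1 hp.1 p.2 hp.2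
      · intro b hb
        refine le_of_forall_pos_sub_le fun ε hε => ?_
        obtain ⟨P₁, P₂, hle, hge⟩ := hkey ε hε
        refine hge.trans (hb ⟨fun x => MvPolynomial.eval x P₁, fun x => MvPolynomial.eval x P₂,
          (MvPolynomial.continuous_eval P₁).continuousOn,
          (MvPolynomial.continuous_eval P₂).continuousOn,
          fun x hx y hy => hle (x, y) ⟨hx, hy⟩, ?_⟩)
        exact hint (fun p => MvPolynomial.eval p.1 P₁ + MvPolynomial.eval p.1 P₂ * p.2)
          ((hpc P₁).add ((hpc P₂).mul continuous_snd)).continuousOn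
    · obtain ⟨P₁, P₂, hle, -⟩ := hkey 1 one_pos
      exact ⟨_, fun x => MvPolynomial.eval x P₁, fun x => MvPolynomial.eval x P₂,
          (MvPolynomial.continuous_eval P₁).continuousOn,
          (MvPolynomial.continuous_eval P₂).continuousOn,
          fun x hx y hy => hle (x, y) ⟨hx, hy⟩, rfl⟩
end
end

section
/- For a finite nonnegative Borel measure φ on X×Y, define A₁φ to be its marginal on X (A₁φ(B) = φ(B×Y)) and A₂φ to be the measure on X given by A₂φ(B) = ∫_{B×Y} y dφ(x,y). If (φ_k) is a sequence of finite nonnegative Borel measures on X×Y such that A₁φ_k converges weakly (i.e. ∫ h d(A₁φ_k) → ∫ h da for every continuous h on X) to a finite nonnegative measure a, A₂φ_k converges weakly to a finite nonnegative measure b, and ∫ T dφ_k converges to c ∈ ℝ, then there exists a finite nonnegative Borel measure ψ on X×Y with a = A₁ψ, b = A₂ψ and c = ∫ T dψ. -/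
open MeasureTheory Set Filter Topology

noncomputable section

/-- The marginal `A₁φ` on `X` of a measure `φ` on `X × Y` : `A₁φ(B) = φ(B × Y)`. -/
def A1 {n : ℕ} (φ : Measure ((Fin n → ℝ) × ℝ)) : Measure (Fin n → ℝ) :=
  φ.map Prod.fst

/-- The measure `A₂φ` on `X` given by `A₂φ(B) = ∫_{B×Y} y dφ(x,y)`. -/
def A2 {n : ℕ} (φ : Measure ((Fin n → ℝ) × ℝ)) : Measure (Fin n → ℝ) :=
  (φ.withDensity fun p => ENNReal.ofReal p.2).map Prod.fst

lemma tend_aux {E ι : Type*} [TopologicalSpace E] [T2Space E] [NormalSpace E] [MeasurableSpace E]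
    [BorelSpace E] {K : Set E} (hK : IsCompact K) {L : Filter ι}
    (Φ : ι → FiniteMeasure E) (ψ : FiniteMeasure E)
    (hΦ : ∀ k, (Φ k : Measure E) Kᶜ = 0) (hψ : (ψ : Measure E) Kᶜ = 0)
    (hlim : Tendsto Φ L (𝓝 ψ)) (g : E → ℝ) (hg : ContinuousOn g K) :
    Tendsto (fun k => ∫ p, g p ∂(Φ k : Measure E)) L (𝓝 (∫ p, g p ∂(ψ : Measure E))) := by
  haveI : CompactSpace K := isCompact_iff_compactSpace.mp hK
  let g0 : BoundedContinuousFunction K ℝ :=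
    BoundedContinuousFunction.mkOfCompact ⟨K.restrict g, hg.restrict⟩
  obtain ⟨G, -, hG⟩ := BoundedContinuousFunction.exists_norm_eq_restrict_eq_of_closed g0 hK.isClosed
  have hGg : ∀ p ∈ K, g p = G p := by
    intro p hp
    have := DFunLike.congr_fun hG ⟨p, hp⟩
    exact this.symm
  have key : ∀ μ : Measure E, μ Kᶜ = 0 → ∫ p, g p ∂μ = ∫ p, G p ∂μ := by
    intro μ hμ
    apply integral_congr_ae
    have : ∀ᵐ p ∂μ, p ∈ K := by rw [ae_iff]; exact hμ
    filter_upwards [this] with p hp using hGg p hp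
  rw [key _ hψ]
  simp_rw [fun k => key _ (hΦ k)]
  exact FiniteMeasure.tendsto_iff_forall_integral_tendsto.1 hlim G

lemma integral_A1 {n : ℕ} (φ : Measure ((Fin n → ℝ) × ℝ)) (h : (Fin n → ℝ) → ℝ)
    (hh : Continuous h) : ∫ x, h x ∂(A1 φ) = ∫ p, h p.1 ∂φ := by
  unfold A1
  rw [integral_map measurable_fst.aemeasurable hh.aestronglyMeasurable]

lemma integral_A2 {n : ℕ} (φ : Measure ((Fin n → ℝ) × ℝ)) (h : (Fin n → ℝ) → ℝ)
    (hh : Continuous h) : ∫ x, h x ∂(A2 φ) = ∫ p, max p.2 0 * h p.1 ∂φ := by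
  unfold A2
  rw [integral_map measurable_fst.aemeasurable hh.aestronglyMeasurable,
    integral_withDensity_eq_integral_toReal_smul (by fun_prop) (by simp)]
  simp [ENNReal.toReal_ofReal']

lemma T_cont {n : ℕ} (γ : ℝ) (hγ : 0 < γ)
    (θ : ((Fin n → ℕ) × ℕ) → ℝ) (hθ : ∀ d, 0 ≤ θ d)
    (hsum : Summable fun d : (Fin n → ℕ) × ℕ => θ d * max 1 γ ^ d.2)
    (T : (Fin n → ℝ) × ℝ → ℝ)
    (hT : ∀ p : (Fin n → ℝ) × ℝ,
      T p = ∑' d : (Fin n → ℕ) × ℕ, θ d * ((∏ i, p.1 i ^ d.1 i) * p.2 ^ d.2)) :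
    ContinuousOn T (Icc 0 1 ×ˢ Icc (0:ℝ) γ) := by
  rw [show T = _ from funext hT]
  refine continuousOn_tsum (fun d => ?_) hsum ?_
  · exact Continuous.continuousOn (by fun_prop)
  · rintro d ⟨x, y⟩ ⟨hx, hy⟩
    simp only at hx hy ⊢
    have h0 : ∀ i, 0 ≤ x i := hx.1
    have h1 : ∀ i, x i ≤ 1 := hx.2
    have hp0 : 0 ≤ ∏ i, x i ^ d.1 i := Finset.prod_nonneg fun i _ => pow_nonneg (h0 i) _
    have hp1 : ∏ i, x i ^ d.1 i ≤ 1 :=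
      Finset.prod_le_one (fun i _ => pow_nonneg (h0 i) _) fun i _ => pow_le_one₀ (h0 i) (h1 i)
    have hy0 := hy.1
    have hyp : y ^ d.2 ≤ max 1 γ ^ d.2 := pow_le_pow_left₀ hy0 (hy.2.trans (le_max_right _ _)) _
    have hy2 : 0 ≤ y ^ d.2 := pow_nonneg hy0 _
    rw [Real.norm_of_nonneg (mul_nonneg (hθ d) (mul_nonneg hp0 hy2))]
    refine mul_le_mul_of_nonneg_left ?_ (hθ d)
    nlinarith

/-- Weak-star closedness of the set
`{(A₁φ, A₂φ, ∫ T dφ) : φ finite nonnegative Borel measure on X × Y}`. -/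
theorem closedness_of_moment_cone
    (n : ℕ) (hn : 1 ≤ n)
    (X : Set (Fin n → ℝ)) (hXsub : X ⊆ Icc 0 1) (hXc : IsCompact X)
    (γ : ℝ) (hγ : 0 < γ)
    (θ : ((Fin n → ℕ) × ℕ) → ℝ) (hθ : ∀ d, 0 ≤ θ d)
    (hsum : Summable fun d : (Fin n → ℕ) × ℕ => θ d * max 1 γ ^ d.2)
    (T : (Fin n → ℝ) × ℝ → ℝ)
    (hT : ∀ p : (Fin n → ℝ) × ℝ,
      T p = ∑' d : (Fin n → ℕ) × ℕ, θ d * ((∏ i, p.1 i ^ d.1 i) * p.2 ^ d.2))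
    (φ : ℕ → Measure ((Fin n → ℝ) × ℝ))
    (hφfin : ∀ k, IsFiniteMeasure (φ k))
    (hφsupp : ∀ k, φ k ((X ×ˢ Icc (0:ℝ) γ)ᶜ) = 0)
    (a b : Measure (Fin n → ℝ)) (hafin : IsFiniteMeasure a) (hbfin : IsFiniteMeasure b)
    (c : ℝ)
    (ha : ∀ h : (Fin n → ℝ) → ℝ, Continuous h →
      Tendsto (fun k => ∫ x, h x ∂(A1 (φ k))) atTop (𝓝 (∫ x, h x ∂a)))
    (hb : ∀ h : (Fin n → ℝ) → ℝ, Continuous h →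
      Tendsto (fun k => ∫ x, h x ∂(A2 (φ k))) atTop (𝓝 (∫ x, h x ∂b)))
    (hc : Tendsto (fun k => ∫ p, T p ∂(φ k)) atTop (𝓝 c)) :
    ∃ ψ : Measure ((Fin n → ℝ) × ℝ), IsFiniteMeasure ψ ∧
      ψ ((X ×ˢ Icc (0:ℝ) γ)ᶜ) = 0 ∧
      a = A1 ψ ∧ b = A2 ψ ∧ c = ∫ p, T p ∂ψ := by
  have hK : IsCompact (X ×ˢ Icc (0:ℝ) γ) := hXc.prod isCompact_Icc
  set K := X ×ˢ Icc (0:ℝ) γ with hKdef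
  let Φ : ℕ → FiniteMeasure ((Fin n → ℝ) × ℝ) := fun k => ⟨φ k, hφfin k⟩
  have hΦ : ∀ k, (Φ k : Measure ((Fin n → ℝ) × ℝ)) = φ k := fun k => rfl
  let C : NNReal := (a univ).toNNReal + 1
  have hmass : ∀ᶠ k in atTop, (Φ k).mass ≤ C := by
    have h1 := ha (fun _ => 1) continuous_const
    simp_rw [integral_A1 _ _ (continuous_const (y := (1:ℝ)))] at h1
    simp only [integral_const, smul_eq_mul, mul_one] at h1
    filter_upwards [h1.eventually (gt_mem_nhds (lt_add_one _))] with k hk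
    rw [← NNReal.coe_le_coe]
    exact hk.le
  let U : Ultrafilter ℕ := hyperfilter ℕ
  have hU : (U : Filter ℕ) ≤ atTop := Nat.hyperfilter_le_atTop
  obtain ⟨ψ, ⟨-, hψK⟩, hψ⟩ := isCompact_iff_ultrafilter_le_nhds'.1
    (isCompact_setOfPred_finiteMeasure_le_of_isCompact C hK) (U.map Φ) (by
      rw [Ultrafilter.mem_map]
      filter_upwards [hU hmass] with k hk
      refine ⟨hk, ?_⟩
      rw [FiniteMeasure.null_iff_toMeasure_null]
      exact hφsupp k)
  rw [FiniteMeasure.null_iff_toMeasure_null] at hψK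
  have hlim : Tendsto Φ (U : Filter ℕ) (𝓝 ψ) := hψ
  have key : ∀ g : (Fin n → ℝ) × ℝ → ℝ, ContinuousOn g K →
      Tendsto (fun k => ∫ p, g p ∂(φ k)) U (𝓝 (∫ p, g p ∂(ψ : Measure ((Fin n → ℝ) × ℝ)))) :=
    fun g hg => tend_aux hK Φ ψ hφsupp hψK hlim g hg
  refine ⟨ψ, inferInstance, hψK, ?_, ?_, ?_⟩
  · haveI : IsFiniteMeasure (A1 (ψ : Measure ((Fin n → ℝ) × ℝ))) := by
      unfold A1; infer_instance
    refine ext_of_forall_integral_eq_of_IsFiniteMeasure fun f => ?_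
    have h1 := (ha f f.continuous).mono_left hU
    simp_rw [integral_A1 _ _ f.continuous] at h1 ⊢
    exact tendsto_nhds_unique h1 (key (fun p => f p.1) (by fun_prop))
  · haveI : IsFiniteMeasure (A2 (ψ : Measure ((Fin n → ℝ) × ℝ))) := by
      unfold A2
      have : IsFiniteMeasure ((ψ : Measure ((Fin n → ℝ) × ℝ)).withDensity
          fun p => ENNReal.ofReal p.2) := by
        apply isFiniteMeasure_withDensity_ofReal
        apply HasFiniteIntegral.of_bounded (C := γ)
        have : ∀ᵐ p ∂(ψ : Measure ((Fin n → ℝ) × ℝ)), p ∈ K := by rw [ae_iff]; exact hψK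
        filter_upwards [this] with p hp
        rw [Real.norm_of_nonneg hp.2.1]
        exact hp.2.2
      infer_instance
    refine ext_of_forall_integral_eq_of_IsFiniteMeasure fun f => ?_
    have h1 := (hb f f.continuous).mono_left hU
    simp_rw [integral_A2 _ _ f.continuous] at h1 ⊢
    exact tendsto_nhds_unique h1 (key (fun p => max p.2 0 * f p.1) (by fun_prop))
  · exact tendsto_nhds_unique (hc.mono_left hU) (key T
      ((T_cont γ hγ θ hθ hsum T hT).mono (prod_mono hXsub subset_rfl)))
end
end

section
/- For every r ≥ max_j d_j, every sequence φ = (φ_d)_{d ∈ ℕ^{n+1}_{2r}} that is feasible at order r satisfies |φ_d| ≤ max(1, γ^{2r}) for all d ∈ ℕ^{n+1}_{2r}; in particular, the feasible set of the order-r relaxation is a compact subset of ℝ^{ℕ^{n+1}_{2r}}. -/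
open MeasureTheory Set

noncomputable section

/-- Multi-indices `e ∈ ℕ^n` with `|e| ≤ r`. -/
def xIdx (n r : ℕ) : Finset (Fin n → ℕ) :=
  Finset.filter (fun e => ∑ i, e i ≤ r) (Fintype.piFinset fun _ : Fin n => Finset.range (r + 1))

/-- Evaluation of a polynomial in `x` of degree `≤ r` given by its coefficients `c`. -/
def polyEval (n r : ℕ) (c : (Fin n → ℕ) → ℝ) (x : Fin n → ℝ) : ℝ :=
  ∑ e ∈ xIdx n r, c e * ∏ i, x i ^ e i

/-- The moment matrix `M_r(φ)`, with rows and columns indexed by `ℕ^{n+1}_r`. -/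
def momMat (n r : ℕ) (φ : ((Fin n → ℕ) × ℕ) → ℝ) : Matrix (idx n r) (idx n r) ℝ :=
  fun a b => φ (fun i => a.1.1 i + b.1.1 i, a.1.2 + b.1.2)

/-- The localizing matrix `M_{r−t}(g φ)` of a polynomial `g` in `x` with coefficients `c`
and degree `≤ 2t`. -/
def locMatX (n : ℕ) (c : (Fin n → ℕ) → ℝ) (t r : ℕ) (φ : ((Fin n → ℕ) × ℕ) → ℝ) :
    Matrix (idx n (r - t)) (idx n (r - t)) ℝ :=
  fun a b => ∑ e ∈ xIdx n (2 * t),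
    c e * φ (fun i => e i + a.1.1 i + b.1.1 i, a.1.2 + b.1.2)

/-- The localizing matrix `M_{r−1}(g_{m+1} φ)` of the polynomial `g_{m+1}(x,y) = y(γ−y)`. -/
def locMatY (n : ℕ) (γ : ℝ) (r : ℕ) (φ : ((Fin n → ℕ) × ℕ) → ℝ) :
    Matrix (idx n (r - 1)) (idx n (r - 1)) ℝ :=
  fun a b => γ * φ (fun i => a.1.1 i + b.1.1 i, a.1.2 + b.1.2 + 1)
    - φ (fun i => a.1.1 i + b.1.1 i, a.1.2 + b.1.2 + 2)

/-- Feasibility of a pseudo-moment sequence `φ` at relaxation order `r`: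
`M_r(φ) ⪰ 0`, `M_{r−d_j}(g_j φ) ⪰ 0` for `j = 1,…,m+1`, and `φ_d = μ_d` for all
`d ∈ D = {d : d_y ≤ 1}` with `|d| ≤ 2r`. -/
def Feasible (n m : ℕ) (γ : ℝ) (g : Fin m → (Fin n → ℕ) → ℝ) (t : Fin m → ℕ)
    (μmom : ((Fin n → ℕ) × ℕ) → ℝ) (r : ℕ) (φ : ((Fin n → ℕ) × ℕ) → ℝ) : Prop :=
  (momMat n r φ).PosSemidef ∧
  (∀ j, (locMatX n (g j) (t j) r φ).PosSemidef) ∧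
  (locMatY n γ r φ).PosSemidef ∧
  ∀ d : (Fin n → ℕ) × ℕ, d.2 ≤ 1 → (∑ i, d.1 i) + d.2 ≤ 2 * r → φ d = μmom d

lemma mem_idx {n r : ℕ} {d : (Fin n → ℕ) × ℕ} : d ∈ idx n r ↔ (∑ i, d.1 i) + d.2 ≤ r := by
  simp only [idx, Finset.mem_filter, Finset.mem_product, Fintype.mem_piFinset, Finset.mem_range,
    and_iff_right_iff_imp]
  intro h
  refine ⟨fun i => ?_, by omega⟩
  have := Finset.single_le_sum (f := d.1) (fun _ _ => Nat.zero_le _) (Finset.mem_univ i)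
  omega

lemma mem_xIdx {n r : ℕ} {d : Fin n → ℕ} (h : d ∈ xIdx n r) : ∑ i, d i ≤ r := by
  simp only [xIdx, Finset.mem_filter] at h
  exact h.2

lemma exists_sub {n : ℕ} (d : Fin n → ℕ) (k : ℕ) (hk : k ≤ ∑ i, d i) :
    ∃ a : Fin n → ℕ, (∀ i, a i ≤ d i) ∧ ∑ i, a i = k := by
  induction k with
  | zero => exact ⟨fun _ => 0, by simp, by simp⟩
  | succ k ih =>
    obtain ⟨a, ha, hs⟩ := ih (by omega)
    have : ∃ i, a i < d i := by
      by_contra! h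
      have := Finset.sum_le_sum (s := Finset.univ) (fun i _ => h i)
      omega
    obtain ⟨i, hi⟩ := this
    refine ⟨fun j => a j + if j = i then 1 else 0, fun j => ?_, ?_⟩
    · have := ha j
      by_cases h : j = i
      · subst h; simp; omega
      · simpa [h] using this
    · simp [Finset.sum_add_distrib, hs]

lemma exists_split {n r : ℕ} (d : (Fin n → ℕ) × ℕ) (hd : (∑ i, d.1 i) + d.2 ≤ 2 * r) :
    ∃ a b : (Fin n → ℕ) × ℕ, (∑ i, a.1 i) + a.2 ≤ r ∧ (∑ i, b.1 i) + b.2 ≤ r ∧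
      d = (fun i => a.1 i + b.1 i, a.2 + b.2) := by
  obtain ⟨a, ha, hs⟩ := exists_sub d.1 (min r (∑ i, d.1 i)) (min_le_right _ _)
  have h2 : ∑ i, (d.1 i - a i) + ∑ i, a i = ∑ i, d.1 i := by
    rw [← Finset.sum_add_distrib]
    exact Finset.sum_congr rfl fun i _ => Nat.sub_add_cancel (ha i)
  refine ⟨(a, min d.2 (r - ∑ i, a i)), (fun i => d.1 i - a i, d.2 - min d.2 (r - ∑ i, a i)),
    ?_, ?_, ?_⟩
  · simp only; omega
  · simp only; omega
  · ext i
    · simp only; have := ha i; omega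
    · simp only; omega

lemma psd_minor {ι : Type*} {M : Matrix ι ι ℝ} (h : M.PosSemidef) (a b : ι) :
    0 ≤ M a a ∧ M a b ^ 2 ≤ M a a * M b b := by
  have h2 := h.submatrix ![a, b]
  have hd := h2.det_nonneg
  have hs : M b a = M a b := by simpa using h.isHermitian.apply a b
  rw [Matrix.det_fin_two] at hd
  simp [hs] at hd
  refine ⟨by simpa using h2.diag_nonneg (i := 0), by nlinarith⟩

lemma closed_psd {ι T : Type*} [Fintype ι] [TopologicalSpace T] (F : T → Matrix ι ι ℝ)
    (hF : ∀ a b, Continuous fun x => F x a b) : IsClosed {x | (F x).PosSemidef} := by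
  have hF' : Continuous F := continuous_pi fun a => continuous_pi fun b => hF a b
  simp only [Matrix.posSemidef_iff_dotProduct_mulVec, Matrix.IsHermitian, ofPred_and, ofPred_forall]
  refine IsClosed.inter (isClosed_eq (by fun_prop) hF') (isClosed_iInter fun v => ?_)
  exact isClosed_le continuous_const (by fun_prop)

lemma feasible_congr {n m : ℕ} {γ : ℝ} {g : Fin m → (Fin n → ℕ) → ℝ} {t : Fin m → ℕ}
    {μmom : ((Fin n → ℕ) × ℕ) → ℝ} {r : ℕ} (hr : 1 ≤ r) (ht : ∀ j, t j ≤ r)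
    {φ φ' : ((Fin n → ℕ) × ℕ) → ℝ} (h : ∀ d ∈ idx n (2 * r), φ d = φ' d)
    (hφ : Feasible n m γ g t μmom r φ) : Feasible n m γ g t μmom r φ' := by
  obtain ⟨h1, h2, h3, h4⟩ := hφ
  refine ⟨?_, fun j => ?_, ?_, fun d hd hd2 => ?_⟩
  · convert h1 using 1
    ext a b
    refine (h _ ?_).symm
    have ha := mem_idx.1 a.2
    have hb := mem_idx.1 b.2
    rw [mem_idx]
    simp only [Finset.sum_add_distrib]
    omega
  · convert h2 j using 1
    ext a b
    refine Finset.sum_congr rfl fun e he => ?_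
    rw [h]
    have ha := mem_idx.1 a.2
    have hb := mem_idx.1 b.2
    have he := mem_xIdx he
    have := ht j
    rw [mem_idx]
    simp only [Finset.sum_add_distrib]
    omega
  · convert h3 using 1
    ext a b
    have ha := mem_idx.1 a.2
    have hb := mem_idx.1 b.2
    simp only [locMatY]
    rw [h, h]
    all_goals
      rw [mem_idx]
      simp only [Finset.sum_add_distrib]
      omega
  · rw [← h d (mem_idx.2 hd2), h4 d hd hd2]

lemma diag_bound {n m : ℕ} {γ : ℝ} (hγ : 0 < γ) {g : Fin m → (Fin n → ℕ) → ℝ} {t : Fin m → ℕ}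
    {μmom : ((Fin n → ℕ) × ℕ) → ℝ} {r : ℕ} 
    (hμ : ∀ α : Fin n → ℕ, μmom (α, 0) ≤ 1)
    {φ : ((Fin n → ℕ) × ℕ) → ℝ} 
    (hφ : Feasible n m γ g t μmom r φ) (α : Fin n → ℕ) (k : ℕ) (hk : ∑ i, α i + k ≤ r) :
    φ (fun i => α i + α i, k + k) ≤ γ ^ (2 * k) := by
  obtain ⟨h1, h2, h3, h4⟩ := hφ
  induction k with
  | zero =>
    rw [h4 _ (by simp) (by simp [Finset.sum_add_distrib]; omega)]
    simpa using hμ _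
  | succ k ih =>
    have ih := ih (by omega)
    let a : idx n r := ⟨(α, k), mem_idx.2 (by simp only; omega)⟩
    let b : idx n r := ⟨(α, k + 1), mem_idx.2 (by simp only; omega)⟩
    let c : idx n (r - 1) := ⟨(α, k), mem_idx.2 (by simp only; omega)⟩
    obtain ⟨e1, e2⟩ := psd_minor h1 a b
    obtain ⟨e3, -⟩ := psd_minor h1 b b
    obtain ⟨e4, -⟩ := psd_minor h3 c c
    simp only [momMat, locMatY, a, b, c] at e1 e2 e3 e4
    rw [show k + (k + 1) = k + k + 1 by ring] at e2
    rw [show k + 1 + (k + 1) = k + k + 2 by ring] at e2 e3 ⊢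
    generalize φ (fun i => α i + α i, k + k) = P at *
    generalize φ (fun i => α i + α i, k + k + 1) = S at *
    generalize φ (fun i => α i + α i, k + k + 2) = Q at *
    have hQ : Q ≤ γ ^ 2 * P := by
      rcases e3.eq_or_lt with h | h
      · rw [← h]; positivity
      · have h5 : Q ^ 2 ≤ (γ * S) ^ 2 := by gcongr; linarith
        have h6 : γ ^ 2 * S ^ 2 ≤ γ ^ 2 * (P * Q) := by gcongr
        refine le_of_mul_le_mul_right ?_ h
        nlinarith
    calc Q ≤ γ ^ 2 * P := hQ
      _ ≤ γ ^ 2 * γ ^ (2 * k) := by gcongr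
      _ = _ := by ring

/-- Every sequence feasible at order `r` is uniformly bounded by
`max(1, γ^{2r})` on indices of total degree `≤ 2r`; in particular the feasible set of the
order-`r` relaxation (viewed in `ℝ^{ℕ^{n+1}_{2r}}`) is compact. -/
theorem feasible_set_bounded_compact
    (n m : ℕ) (hn : 1 ≤ n) (hm : 1 ≤ m)
    (γ : ℝ) (hγ : 0 < γ)
    (g : Fin m → (Fin n → ℕ) → ℝ) (t : Fin m → ℕ)
    (hgdeg : ∀ j e, 2 * t j < ∑ i, e i → g j e = 0)
    (hg1t : t ⟨0, hm⟩ = 1)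
    (hg1 : ∀ x : Fin n → ℝ,
      polyEval n (2 * t ⟨0, hm⟩) (g ⟨0, hm⟩) x = (n : ℝ) - ∑ i, x i ^ 2)
    (X : Set (Fin n → ℝ))
    (hXdef : X = {x | ∀ j, 0 ≤ polyEval n (2 * t j) (g j) x})
    (hXsub : X ⊆ Icc 0 1) (hXc : IsCompact X)
    (lam : Measure (Fin n → ℝ)) [IsProbabilityMeasure lam] (hlam : lam Xᶜ = 0)
    (f : (Fin n → ℝ) → ℝ) (hf : Measurable f) (hfY : ∀ x ∈ X, f x ∈ Icc 0 γ)
    (μmom : ((Fin n → ℕ) × ℕ) → ℝ)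
    (hμmom : ∀ d : (Fin n → ℕ) × ℕ,
      μmom d = ∫ x, (∏ i, x i ^ d.1 i) * f x ^ d.2 ∂lam) :
    ∀ r : ℕ, 1 ≤ r → (∀ j, t j ≤ r) →
      (∀ φ : ((Fin n → ℕ) × ℕ) → ℝ, Feasible n m γ g t μmom r φ →
        ∀ d : (Fin n → ℕ) × ℕ, (∑ i, d.1 i) + d.2 ≤ 2 * r →
          |φ d| ≤ max 1 (γ ^ (2 * r))) ∧
      IsCompact {ψ : idx n (2 * r) → ℝ |
        ∃ φ : ((Fin n → ℕ) × ℕ) → ℝ, Feasible n m γ g t μmom r φ ∧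
          ∀ d : idx n (2 * r), ψ d = φ d.1} := by
  intro r hr ht
  have hμ : ∀ α : Fin n → ℕ, μmom (α, 0) ≤ 1 := by
    intro α
    rw [hμmom]
    have hae : ∀ᵐ x ∂lam, ‖(∏ i, x i ^ α i) * f x ^ 0‖ ≤ 1 := by
      have : ∀ᵐ x ∂lam, x ∈ X := by rw [ae_iff]; exact hlam
      filter_upwards [this] with x hx
      have hx := hXsub hx
      rw [pow_zero, mul_one, norm_prod]
      refine Finset.prod_le_one (fun _ _ => norm_nonneg _) fun i _ => ?_
      rw [norm_pow]
      refine pow_le_one₀ (norm_nonneg _) ?_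
      rw [Real.norm_eq_abs, abs_of_nonneg (hx.1 i)]
      exact hx.2 i
    have := norm_integral_le_of_norm_le_const hae
    simp only [probReal_univ, mul_one] at this
    exact (le_abs_self _).trans this
  have hB : ∀ φ : ((Fin n → ℕ) × ℕ) → ℝ, Feasible n m γ g t μmom r φ →
        ∀ d : (Fin n → ℕ) × ℕ, (∑ i, d.1 i) + d.2 ≤ 2 * r →
          |φ d| ≤ max 1 (γ ^ (2 * r)) := by
    intro φ hφ d hd
    have key : ∀ a : (Fin n → ℕ) × ℕ, (∑ i, a.1 i) + a.2 ≤ r →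
        φ (fun i => a.1 i + a.1 i, a.2 + a.2) ≤ max 1 (γ ^ (2 * r)) := by
      intro a ha
      refine (diag_bound hγ hμ hφ a.1 a.2 ha).trans ?_
      rcases le_total γ 1 with h | h
      · exact (pow_le_one₀ hγ.le h).trans (le_max_left _ _)
      · exact (pow_le_pow_right₀ h (by omega)).trans (le_max_right _ _)
    obtain ⟨a, b, ha, hb, rfl⟩ := exists_split d hd
    have ka := key a ha
    have kb := key b hb
    let a' : idx n r := ⟨a, mem_idx.2 ha⟩
    let b' : idx n r := ⟨b, mem_idx.2 hb⟩
    obtain ⟨e1, e2⟩ := psd_minor hφ.1 a' b'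
    obtain ⟨e3, -⟩ := psd_minor hφ.1 b' b'
    simp only [momMat, a', b'] at e1 e2 e3
    apply abs_le_of_sq_le_sq _ (by positivity)
    refine e2.trans ?_
    rw [sq]
    gcongr
  refine ⟨hB, ?_⟩
  let E : (idx n (2 * r) → ℝ) → ((Fin n → ℕ) × ℕ) → ℝ :=
    fun ψ d => if h : d ∈ idx n (2 * r) then ψ ⟨d, h⟩ else 0
  have hE : ∀ d, Continuous fun ψ => E ψ d := by
    intro d
    by_cases h : d ∈ idx n (2 * r)
    · simp only [E, h, dif_pos]; fun_prop
    · simp only [E, h, dif_neg, not_false_eq_true]; fun_prop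
  have hset : {ψ : idx n (2 * r) → ℝ |
        ∃ φ : ((Fin n → ℕ) × ℕ) → ℝ, Feasible n m γ g t μmom r φ ∧
          ∀ d : idx n (2 * r), ψ d = φ d.1} = {ψ | Feasible n m γ g t μmom r (E ψ)} := by
    ext ψ
    constructor
    · rintro ⟨φ, hφ, h⟩
      refine feasible_congr hr ht (fun d hd => ?_) hφ
      simp only [E, hd, dif_pos, h]
    · intro h
      exact ⟨E ψ, h, fun d => by simp [E]⟩
  rw [hset]
  refine Metric.isCompact_of_isClosed_isBounded ?_ ?_
  · simp only [Feasible, ofPred_and, ofPred_forall]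
    refine IsClosed.inter ?_ (IsClosed.inter ?_ (IsClosed.inter ?_ ?_))
    · exact closed_psd _ fun a b => hE _
    · refine isClosed_iInter fun j => closed_psd _ fun a b => ?_
      exact continuous_finsetSum _ fun e _ => continuous_const.mul (hE _)
    · exact closed_psd _ fun a b => (continuous_const.mul (hE _)).sub (hE _)
    · refine isClosed_iInter fun d => isClosed_iInter fun _ => isClosed_iInter fun _ => ?_
      exact isClosed_eq (hE d) continuous_const
  · refine (Metric.isBounded_closedBall (x := 0) (r := max 1 (γ ^ (2 * r)))).subset ?_
    intro ψ hψ
    rw [mem_closedBall_zero_iff, pi_norm_le_iff_of_nonneg (by positivity)]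
    intro d
    have := hB _ hψ d.1 (mem_idx.1 d.2)
    simpa [E] using this
end
end
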